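/- arXiv:math/0609634 — 6 statements merged into one kernel-verified Lean document; each statement's English description precedes it below -/
import Mathlib

section
/- Let x = (S, Λ, a) be an abelian-group k-parameter and let U be a set of functions from ℕ to S of cardinality at most ℵ_k. Then the subgroup G_U of G_x is a free abelian group. -/
open Cardinal

namespace Sh883

/-- A "restricted tuple": the result of replacing the `m`-th coordinate of a `(k+1)`-tuple
of functions `ℕ → S` by a finite sequence (list) of elements of `S`, keeping the other
coordinates. -/
structure Res (k : ℕ) (S : Type u) where
  m : Fin (k + 1)
  seq : List S
  rest : (l : Fin (k + 1)) → l ≠ m → ℕ → S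

/-- `η̄↾⟨m,n⟩` : replace the `m`-th coordinate of `η̄` by the finite sequence
`⟨η_m(0), …, η_m(n-1)⟩`. -/
def restrictAt {k : ℕ} {S : Type u} (η : Fin (k + 1) → ℕ → S) (m : Fin (k + 1)) (n : ℕ) :
    Res k S :=
  ⟨m, List.ofFn fun i : Fin n => η m i, fun l _ => η l⟩

/-- `Λ_m = {η̄↾⟨m,n⟩ : η̄ ∈ Λ, n ∈ ℕ}`. -/
def LambdaResAt {k : ℕ} {S : Type u} (Λ : Set (Fin (k + 1) → ℕ → S)) (m : Fin (k + 1)) :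
    Set (Res k S) :=
  {ν | ∃ η ∈ Λ, ∃ n : ℕ, ν = restrictAt η m n}

/-- `Λ_0 ∪ … ∪ Λ_k`. -/
def LambdaRes {k : ℕ} {S : Type u} (Λ : Set (Fin (k + 1) → ℕ → S)) : Set (Res k S) :=
  ⋃ m, LambdaResAt Λ m

/-- The generators of the group `G_x`: `x_ν` for `ν ∈ Λ_0 ∪ … ∪ Λ_k`, `y_{η̄,n}` for
`η̄ ∈ Λ`, `n ∈ ℕ`, and `z`. -/
inductive Gen (k : ℕ) (S : Type u) (Λ : Set (Fin (k + 1) → ℕ → S)) : Type u where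
  | X : ↥(LambdaRes Λ) → Gen k S Λ
  | Y : ↥Λ → ℕ → Gen k S Λ
  | Z : Gen k S Λ

/-- `η̄↾⟨m,n⟩` as an element of `Λ_0 ∪ … ∪ Λ_k`, for `η̄ ∈ Λ`. -/
def resMem {k : ℕ} {S : Type u} {Λ : Set (Fin (k + 1) → ℕ → S)} (η : ↥Λ) (m : Fin (k + 1))
    (n : ℕ) : ↥(LambdaRes Λ) :=
  ⟨restrictAt (η : Fin (k + 1) → ℕ → S) m n, Set.mem_iUnion.2 ⟨m, (η : _), η.2, n, rfl⟩⟩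

/-- The relation element `n!·y_{η̄,n+1} − y_{η̄,n} − a(η̄,n)·z − Σ_{m≤k} x_{η̄↾⟨m,n⟩}`. -/
def relEl {k : ℕ} {S : Type u} {Λ : Set (Fin (k + 1) → ℕ → S)} (a : ↥Λ → ℕ → ℤ)
    (η : ↥Λ) (n : ℕ) : FreeAbelianGroup (Gen k S Λ) :=
  (n.factorial : ℤ) • FreeAbelianGroup.of (Gen.Y η (n + 1))
    - FreeAbelianGroup.of (Gen.Y η n)
    - a η n • FreeAbelianGroup.of Gen.Z
    - ∑ m : Fin (k + 1), FreeAbelianGroup.of (Gen.X (resMem η m n))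

/-- The subgroup of relations. -/
def relSub {k : ℕ} {S : Type u} {Λ : Set (Fin (k + 1) → ℕ → S)} (a : ↥Λ → ℕ → ℤ) :
    AddSubgroup (FreeAbelianGroup (Gen k S Λ)) :=
  AddSubgroup.closure {g | ∃ (η : ↥Λ) (n : ℕ), g = relEl a η n}

/-- The group `G_x` of the abelian-group `k`-parameter `x = (S, Λ, a)`. -/
abbrev Gx {k : ℕ} {S : Type u} {Λ : Set (Fin (k + 1) → ℕ → S)} (a : ↥Λ → ℕ → ℤ) : Type u :=
  FreeAbelianGroup (Gen k S Λ) ⧸ relSub a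


/-- The image of the generator `x_ν` in `G_x`. -/
def xg {k : ℕ} {S : Type u} {Λ : Set (Fin (k + 1) → ℕ → S)} (a : ↥Λ → ℕ → ℤ)
    (ν : ↥(LambdaRes Λ)) : Gx a :=
  QuotientAddGroup.mk (FreeAbelianGroup.of (Gen.X ν))

/-- The image of the generator `y_{η̄,n}` in `G_x`. -/
def yg {k : ℕ} {S : Type u} {Λ : Set (Fin (k + 1) → ℕ → S)} (a : ↥Λ → ℕ → ℤ)
    (η : ↥Λ) (n : ℕ) : Gx a :=
  QuotientAddGroup.mk (FreeAbelianGroup.of (Gen.Y η n))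

/-- The image of the distinguished generator `z` in `G_x`. -/
def zg {k : ℕ} {S : Type u} {Λ : Set (Fin (k + 1) → ℕ → S)} (a : ↥Λ → ℕ → ℤ) : Gx a :=
  QuotientAddGroup.mk (FreeAbelianGroup.of Gen.Z)

/-- The subgroup `G_U` of `G_x`, for a set `U` of functions `ℕ → S`: generated by `z`,
the `y_{η̄,n}` for `η̄ ∈ Λ` with all coordinates in `U`, and the `x_{η̄↾⟨m,n⟩}` for
`η̄` a `(k+1)`-tuple of members of `U` with `η̄↾⟨m,n⟩ ∈ Λ_m`. -/
def GU {k : ℕ} {S : Type u} {Λ : Set (Fin (k + 1) → ℕ → S)} (a : ↥Λ → ℕ → ℤ)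
    (U : Set (ℕ → S)) : AddSubgroup (Gx a) :=
  AddSubgroup.closure
    ({zg a}
      ∪ {g | ∃ (η : ↥Λ) (n : ℕ),
          (∀ l : Fin (k + 1), (η : Fin (k + 1) → ℕ → S) l ∈ U) ∧ g = yg a η n}
      ∪ {g | ∃ (η : Fin (k + 1) → ℕ → S) (m : Fin (k + 1)) (n : ℕ) (ν : ↥(LambdaRes Λ)),
          (∀ l : Fin (k + 1), η l ∈ U) ∧ (ν : Res k S) = restrictAt η m n ∧ g = xg a ν})

/-- The subgroup `G_{U,u}` of `G_x`: generated by the union of the subgroups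
`G_{U ∪ (u ∖ {η})}` for `η ∈ u`. -/
def GUu {k : ℕ} {S : Type u} {Λ : Set (Fin (k + 1) → ℕ → S)} (a : ↥Λ → ℕ → ℤ)
    (U u : Set (ℕ → S)) : AddSubgroup (Gx a) :=
  ⨆ η ∈ u, GU a (U ∪ (u \ {η}))

end Sh883

/-!
By induction on `k`, the `(k + 1)`-tuples from a set `U` of size at most `ℵ_k` have a well-order in
which every tuple `η` has a coordinate `m` such that only finitely many predecessors of `η` differ
from it at `m` alone: compare maxima first, and use that the initial segments of `U` have size at
most `ℵ_(k-1)`. Hence, for all large `n`, the tuple `η` is the least of the tuples from `U` that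
restrict to `η↾⟨m,n⟩`. So the relations for `η` can be solved for `x_{η↾⟨m,n⟩}` when `n` is large
and for `y_{η,n}` when `n` is small, both with coefficient `-1`, and the remaining generators of
`G_U` generate it. They are independent because the relations for the tuples not contained in `U`
have the nonzero coefficient `n!` at `y_{η,n+1}`, which makes the whole system triangular.
-/

namespace Sh883

/-! ### Line-finite well-orders of tuples -/

/-- A well-order `r` of the tuples `ι → A` is line-finite if every tuple `η` has a coordinate `m`
such that only finitely many of the tuples differing from `η` at most at `m` lie `r`-below `η`. -/
structure IsLineFinite {ι A : Type*} [DecidableEq ι] (r : (ι → A) → (ι → A) → Prop) : Prop where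
  isWellOrder : IsWellOrder (ι → A) r
  exists_finite_update (η : ι → A) : ∃ m, {a | r (Function.update η m a) η}.Finite

theorem exists_isLineFinite_of_countable (ι A : Type*) [Unique ι] [DecidableEq ι] [Countable A] :
    ∃ r : (ι → A) → (ι → A) → Prop, IsLineFinite r := by
  obtain ⟨f, hf⟩ := exists_injective_nat A
  have hf' : Function.Injective fun η : ι → A => f (η default) :=
    hf.comp (Equiv.funUnique ι A).injective
  refine ⟨_, hf'.isWellOrder LT.lt, fun η => ⟨default, ?_⟩⟩
  simp only [Function.onFun, Function.update_self]
  exact (Set.finite_Iio (f (η default))).preimage hf.injOn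

theorem exists_linearOrder_mk_Iic_le {A : Type*} {κ : Cardinal} (hκ : ℵ₀ ≤ κ)
    (hA : #A ≤ Order.succ κ) :
    ∃ (_ : LinearOrder A) (_ : WellFoundedLT A), ∀ c : A, #(Set.Iic c) ≤ κ := by
  classical
  obtain ⟨r, _, hr⟩ := Cardinal.exists_ord_eq A
  let _ : LinearOrder A := linearOrderOfSTO r
  have _ : WellFoundedLT A := ⟨IsWellFounded.wf (r := r)⟩
  refine ⟨inferInstance, inferInstance, fun c => ?_⟩
  have hIio : #(Set.Iio c) ≤ κ := Order.lt_succ_iff.1 ((Cardinal.mk_Iio_lt c hr).trans_le hA)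
  rw [← Set.Iio_insert]
  exact mk_insert_le.trans (add_le_of_le hκ hIio (one_le_aleph0.trans hκ))

section Step

variable {k : ℕ} {A : Type u} [LinearOrder A]

/-- `i` is the least index at which `η` attains its maximum. -/
structure IsFirstArgmax (η : Fin k → A) (i : Fin k) : Prop where
  le (l : Fin k) : η l ≤ η i
  lt (l : Fin k) : l < i → η l < η i

theorem exists_isFirstArgmax (η : Fin (k + 1) → A) : ∃ i, IsFirstArgmax η i := by
  obtain ⟨i, hi⟩ := Finite.exists_max fun l => toLex (η l, OrderDual.toDual l)
  simp only [Prod.Lex.toLex_le_toLex, OrderDual.toDual_le_toDual] at hi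
  exact ⟨i, fun l => (hi l).elim le_of_lt fun h => h.1.le,
    fun l hl => (hi l).resolve_right fun h => h.2.not_gt hl⟩

theorem IsFirstArgmax.unique {η : Fin k → A} {i j : Fin k} (hi : IsFirstArgmax η i)
    (hj : IsFirstArgmax η j) : i = j :=
  le_antisymm (not_lt.1 fun h => (hi.lt j h).not_ge (hj.le i))
    (not_lt.1 fun h => (hj.lt i h).not_ge (hi.le j))

theorem IsFirstArgmax.update {η : Fin k → A} {i m : Fin k} {a : A} (hi : IsFirstArgmax η i)
    (hm : i ≠ m) (ha : a < η i) : IsFirstArgmax (Function.update η m a) i := by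
  constructor <;> intro l <;> rw [Function.update_of_ne hm, Function.update_apply]
  · split_ifs
    exacts [ha.le, hi.le l]
  · intro hl
    split_ifs
    exacts [ha, hi.lt l hl]

/-- The least index at which `η` attains its maximum. -/
noncomputable def firstArgmax (η : Fin (k + 1) → A) : Fin (k + 1) :=
  (exists_isFirstArgmax η).choose

theorem isFirstArgmax_firstArgmax (η : Fin (k + 1) → A) : IsFirstArgmax η (firstArgmax η) :=
  (exists_isFirstArgmax η).choose_spec

variable (r : ∀ c : A, (Fin k → Set.Iic c) → (Fin k → Set.Iic c) → Prop)
  [∀ c, IsWellOrder _ (r c)]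

/-- The rank, in the well-order `r c`, of a tuple with all its entries in the initial segment
`Set.Iic c`; the junk value `0` for the other tuples. -/
noncomputable def segmentRank (c : A) : (Fin k → A) → Ordinal.{u} :=
  Function.extend (fun ζ l => ζ l) (Ordinal.typein (r c)) 0

theorem segmentRank_coe {c : A} (ζ : Fin k → Set.Iic c) :
    segmentRank r c (fun l => ζ l) = Ordinal.typein (r c) ζ :=
  Subtype.val_injective.comp_left.extend_apply _ _ ζ

theorem segmentRank_injOn (c : A) : Set.InjOn (segmentRank r c) {ζ | ∀ l, ζ l ≤ c} := by
  intro ζ hζ ξ hξ h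
  lift ζ to Fin k → Set.Iic c using hζ
  lift ξ to Fin k → Set.Iic c using hξ
  have h' : Ordinal.typein (r c) ζ = Ordinal.typein (r c) ξ := by
    simpa only [← segmentRank_coe] using h
  rw [(Ordinal.typein_inj (r c)).1 h']

/-- The invariant by which `(k + 1)`-tuples are ordered, given well-orders `r c` of the `k`-tuples
from each initial segment `Set.Iic c`: first the maximum of `η`, then the first index where it is
attained, then the rank of the remaining entries among the tuples bounded by that maximum. -/
noncomputable def maxKey (η : Fin (k + 1) → A) : A ×ₗ Fin (k + 1) ×ₗ Ordinal.{u} :=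
  toLex (η (firstArgmax η), toLex (firstArgmax η,
    segmentRank r (η (firstArgmax η)) ((firstArgmax η).removeNth η)))

theorem maxKey_eq {η : Fin (k + 1) → A} {i : Fin (k + 1)} (hi : IsFirstArgmax η i) :
    maxKey r η = toLex (η i, toLex (i, segmentRank r (η i) (i.removeNth η))) := by
  rw [maxKey, (isFirstArgmax_firstArgmax η).unique hi]

theorem maxKey_injective : Function.Injective (maxKey r) := by
  intro η ν h
  simp only [maxKey, EmbeddingLike.apply_eq_iff_eq, Prod.mk.injEq] at h
  obtain ⟨hmax, hindex, hrank⟩ := h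
  have hη := isFirstArgmax_firstArgmax η
  have hν := isFirstArgmax_firstArgmax ν
  rw [← hindex] at hmax hrank hν
  rw [← hmax] at hrank
  have hrest : (firstArgmax η).removeNth η = (firstArgmax η).removeNth ν :=
    segmentRank_injOn r _ (fun l => hη.le _) (fun l => hmax ▸ hν.le _) hrank
  rw [← Fin.insertNth_self_removeNth (firstArgmax η) η, hmax, hrest,
    Fin.insertNth_self_removeNth]

theorem maxKey_lt_maxKey_iff {η : Fin (k + 1) → A} {i : Fin (k + 1)} {m : Fin k} {a : A}
    (hi : IsFirstArgmax η i) (ha : a < η i) :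
    maxKey r (Function.update η (i.succAbove m) a) < maxKey r η ↔
      r (η i) (Function.update (fun l => ⟨i.removeNth η l, hi.le _⟩) m ⟨a, ha.le⟩)
        (fun l => ⟨i.removeNth η l, hi.le _⟩) := by
  have hne : i ≠ i.succAbove m := (Fin.succAbove_ne i m).symm
  have hcoe : (fun l => (Function.update (fun l => (⟨i.removeNth η l, hi.le _⟩ : Set.Iic (η i))) m
      ⟨a, ha.le⟩ l : A)) = Function.update (i.removeNth η) m a :=
    Function.comp_update Subtype.val _ m _
  rw [← Ordinal.typein_lt_typein (r _), ← segmentRank_coe, ← segmentRank_coe, hcoe,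
    maxKey_eq r hi, maxKey_eq r (hi.update hne ha), Function.update_of_ne hne,
    Fin.removeNth_update_succAbove]
  simp only [Prod.Lex.toLex_lt_toLex, lt_self_iff_false, true_and, false_or]

theorem le_of_maxKey_update_lt {η : Fin (k + 1) → A} {i m : Fin (k + 1)} {a : A}
    (hi : IsFirstArgmax η i) (h : maxKey r (Function.update η m a) < maxKey r η) : a ≤ η i := by
  have hle := Prod.Lex.monotone_fst _ _ h.le
  have ha := (isFirstArgmax_firstArgmax (Function.update η m a)).le m
  rw [Function.update_self] at ha
  exact ha.trans (hle.trans (hi.le _))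

theorem exists_isLineFinite_succ [WellFoundedLT A]
    (h : ∀ c : A, ∃ r : (Fin k → Set.Iic c) → (Fin k → Set.Iic c) → Prop, IsLineFinite r) :
    ∃ r : (Fin (k + 1) → A) → (Fin (k + 1) → A) → Prop, IsLineFinite r := by
  choose r hr using h
  have _ := fun c => (hr c).isWellOrder
  refine ⟨_, (maxKey_injective r).isWellOrder LT.lt, fun η => ?_⟩
  obtain ⟨i, hi⟩ := exists_isFirstArgmax η
  obtain ⟨m, hm⟩ := (hr (η i)).exists_finite_update fun l => ⟨i.removeNth η l, hi.le _⟩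
  refine ⟨i.succAbove m, ((hm.image Subtype.val).insert (η i)).subset fun a ha => ?_⟩
  rcases (le_of_maxKey_update_lt r hi ha).eq_or_lt with rfl | hlt
  · exact Set.mem_insert _ _
  · exact Or.inr ⟨⟨a, hlt.le⟩, (maxKey_lt_maxKey_iff r hi hlt).1 ha, rfl⟩

end Step

theorem exists_isLineFinite (k : ℕ) {A : Type u} (hA : #A ≤ ℵ_ k) :
    ∃ r : (Fin (k + 1) → A) → (Fin (k + 1) → A) → Prop, IsLineFinite r := by
  induction k generalizing A with
  | zero =>
    have : Countable A := mk_le_aleph0_iff.1 (by simpa using hA)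
    exact exists_isLineFinite_of_countable (Fin 1) A
  | succ k ih =>
    rw [Nat.cast_succ, ← succ_aleph] at hA
    obtain ⟨_, _, hIic⟩ := exists_linearOrder_mk_Iic_le (aleph0_le_aleph _) hA
    exact exists_isLineFinite_succ fun c => ih (hIic c)

/-! ### Triangular systems of relations -/

/-- A family of relations `r j` between generators indexed by `I` is triangular if each `r j`
involves its own pivot, while the pivots of other relations occur in `r j` only for relations of
strictly lower level. -/
structure IsTriangular {R I J W : Type*} [Zero R] [LT W] (r : J → I →₀ R) (pivot : J → I)
    (level : J → W) : Prop where
  pivot_ne_zero (j : J) : r j (pivot j) ≠ 0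
  level_lt (i j : J) : i ≠ j → r j (pivot i) ≠ 0 → level i < level j

namespace IsTriangular

open Finsupp Submodule

variable {R I J W M : Type*} [Ring R] [Preorder W] [AddCommGroup M] [Module R M]
  {r : J → I →₀ R} {pivot : J → I} {level : J → W}

-- The pivot of a relation of maximal level in a linear combination cannot cancel.
theorem eq_zero_of_mem_span [NoZeroDivisors R] (h : IsTriangular r pivot level) {l : I →₀ R}
    (hl : l ∈ span R (Set.range r)) (hpivot : ∀ j, l (pivot j) = 0) : l = 0 := by
  obtain ⟨c, rfl⟩ := mem_span_range_iff_exists_finsupp.1 hl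
  by_contra hne
  have hc : c.support.Nonempty := by
    rw [support_nonempty_iff]
    rintro rfl
    exact hne sum_zero_index
  obtain ⟨j, hj, hmax⟩ := c.support.exists_maximalFor level hc
  have hothers (i : J) (hi : i ∈ c.support) (hij : i ≠ j) : c i * r i (pivot j) = 0 := by
    by_contra hne
    have hlt := h.level_lt j i hij.symm (right_ne_zero_of_mul hne)
    exact hlt.not_ge (hmax hi hlt.le)
  have hsum : ∑ i ∈ c.support, c i * r i (pivot j) = 0 := by
    simpa [Finsupp.sum_apply, Finsupp.sum] using hpivot j
  rw [Finset.sum_eq_single_of_mem j hj hothers] at hsum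
  exact mul_ne_zero (mem_support_iff.1 hj) (h.pivot_ne_zero j) hsum

theorem linearIndepOn [NoZeroDivisors R] (h : IsTriangular r pivot level) {g : I → M}
    (hg : LinearMap.ker (linearCombination R g) ≤ span R (Set.range r)) :
    LinearIndepOn R g (Set.range pivot)ᶜ := by
  refine linearIndepOn_iff.2 fun l hl hzero => h.eq_zero_of_mem_span (hg hzero) fun j => ?_
  exact notMem_support_iff.1 fun hj => hl hj ⟨j, rfl⟩

theorem pivot_mem_span [WellFoundedLT W] (h : IsTriangular r pivot level) {g : I → M}
    (hg : ∀ j, linearCombination R g (r j) = 0) {T : Set I}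
    (hunit : ∀ j, pivot j ∈ T → IsUnit (r j (pivot j)))
    (hsupport : ∀ j, pivot j ∈ T → ↑(r j).support ⊆ T) (j : J) (hj : pivot j ∈ T) :
    g (pivot j) ∈ span R (g '' (T \ Set.range pivot)) := by
  classical
  induction j using WellFounded.induction (InvImage.wf level wellFounded_lt) with
  | _ j ih =>
    rw [← smul_mem_iff_of_isUnit _ (hunit j hj)]
    have hrel := hg j
    rw [linearCombination_apply, ← add_sum_erase' (r j) (pivot j) (fun i a => a • g i) (by simp),
      add_eq_zero_iff_eq_neg] at hrel
    rw [hrel, neg_mem_iff]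
    refine sum_mem fun i hi => smul_mem _ _ ?_
    rw [support_erase, Finset.mem_erase] at hi
    obtain ⟨hne, hi⟩ := hi
    have hiT : i ∈ T := hsupport j hj hi
    by_cases hrange : i ∈ Set.range pivot
    · obtain ⟨j', rfl⟩ := hrange
      exact ih j' (h.level_lt j' j (ne_of_apply_ne pivot hne) (mem_support_iff.1 hi)) hiT
    · exact subset_span ⟨i, ⟨hiT, hrange⟩, rfl⟩

theorem span_image_diff_range_pivot [WellFoundedLT W] (h : IsTriangular r pivot level) {g : I → M}
    (hg : ∀ j, linearCombination R g (r j) = 0) {T : Set I}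
    (hunit : ∀ j, pivot j ∈ T → IsUnit (r j (pivot j)))
    (hsupport : ∀ j, pivot j ∈ T → ↑(r j).support ⊆ T) :
    span R (g '' (T \ Set.range pivot)) = span R (g '' T) := by
  refine le_antisymm (span_mono (Set.image_mono Set.sdiff_subset)) (span_le.2 ?_)
  rintro _ ⟨i, hi, rfl⟩
  by_cases hrange : i ∈ Set.range pivot
  · obtain ⟨j, rfl⟩ := hrange
    exact h.pivot_mem_span hg hunit hsupport j hi
  · exact subset_span ⟨i, ⟨hi, hrange⟩, rfl⟩

theorem free_span_image [NoZeroDivisors R] [WellFoundedLT W] (h : IsTriangular r pivot level)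
    {g : I → M} (hg : LinearMap.ker (linearCombination R g) = span R (Set.range r)) {T : Set I}
    (hunit : ∀ j, pivot j ∈ T → IsUnit (r j (pivot j)))
    (hsupport : ∀ j, pivot j ∈ T → ↑(r j).support ⊆ T) :
    Module.Free R (span R (g '' T)) := by
  have hrel (j : J) : linearCombination R g (r j) = 0 := hg.ge (subset_span ⟨j, rfl⟩)
  have hindep : LinearIndepOn R g (T \ Set.range pivot) :=
    (h.linearIndepOn hg.le).mono fun _ hi => hi.2
  rw [← h.span_image_diff_range_pivot hrel hunit hsupport, Set.image_eq_range]
  exact .of_basis (.span hindep)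

end IsTriangular

/-! ### Elimination in the group `G_x` -/

variable {k : ℕ} {S : Type u}

theorem eq_and_eq_of_restrictAt_eq {η ν : Fin (k + 1) → ℕ → S} {m m' : Fin (k + 1)} {n n' : ℕ}
    (h : restrictAt η m n = restrictAt ν m' n') : m = m' ∧ n = n' := by
  have hlength := congrArg (List.length ∘ Res.seq) h
  simp only [restrictAt, Function.comp_apply, List.length_ofFn] at hlength
  exact ⟨congrArg Res.m h, hlength⟩

theorem restrictAt_eq_restrictAt_iff {η ν : Fin (k + 1) → ℕ → S} {m : Fin (k + 1)} {n : ℕ} :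
    restrictAt η m n = restrictAt ν m n ↔
      (∀ i < n, η m i = ν m i) ∧ ∀ l, l ≠ m → η l = ν l := by
  simp [restrictAt, funext_iff, Fin.forall_iff]

theorem eventually_eq_of_agree {s : Set (ℕ → S)} (hs : s.Finite) (v : ℕ → S) :
    ∀ᶠ n in Filter.atTop, ∀ u ∈ s, (∀ i < n, u i = v i) → u = v := by
  refine (Filter.eventually_all_finite hs).2 fun u _ => ?_
  by_cases huv : u = v
  · exact .of_forall fun _ _ => huv
  · obtain ⟨i, hi⟩ := Function.ne_iff.1 huv
    filter_upwards [Filter.eventually_gt_atTop i] with n hn hagree using absurd (hagree i hn) hi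

theorem IsLineFinite.exists_forall_restrictAt {U : Set (ℕ → S)}
    {r : (Fin (k + 1) → U) → (Fin (k + 1) → U) → Prop} (hr : IsLineFinite r)
    (η : Fin (k + 1) → U) :
    ∃ (m : Fin (k + 1)) (N : ℕ), ∀ ν, η ≠ ν → ∀ n, N ≤ n →
      restrictAt (fun l => (ν l : ℕ → S)) m n = restrictAt (fun l => (η l : ℕ → S)) m n →
      r η ν := by
  have := hr.isWellOrder
  obtain ⟨m, hm⟩ := hr.exists_finite_update η
  obtain ⟨N, hN⟩ := Filter.eventually_atTop.1
    (eventually_eq_of_agree (hm.image Subtype.val) (η m : ℕ → S))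
  refine ⟨m, N, fun ν hne n hn h => ?_⟩
  obtain ⟨hagree, hoff⟩ := restrictAt_eq_restrictAt_iff.1 h
  have hν : Function.update η m (ν m) = ν :=
    Function.update_eq_iff.2 ⟨rfl, fun l hl => Subtype.ext (hoff l hl).symm⟩
  rcases trichotomous_of r η ν with hlt | heq | hgt
  · exact hlt
  · exact absurd heq hne
  · have hmem : (ν m : ℕ → S) ∈ Subtype.val '' {a | r (Function.update η m a) η} :=
      ⟨ν m, by rwa [Set.mem_ofPred_eq, hν], rfl⟩
    refine absurd ?_ hne
    rw [← hν, Subtype.ext (hN n hn _ hmem hagree), Function.update_eq_self]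

/-- The data from which the pivots of the defining relations of `G_x` are read off: for each tuple
`η` from `U`, a coordinate `coord η` such that, for `n ≥ bound η`, every other tuple from `U` with
the same restriction as `η` at `⟨coord η, n⟩` has larger rank. The values at tuples not contained in
`U` are unconstrained. -/
structure PivotChoice (k : ℕ) {S : Type u} (U : Set (ℕ → S)) where
  rank : (Fin (k + 1) → ℕ → S) → Ordinal.{u}
  coord : (Fin (k + 1) → ℕ → S) → Fin (k + 1)
  bound : (Fin (k + 1) → ℕ → S) → ℕ
  rank_lt {η ν : Fin (k + 1) → ℕ → S} {n : ℕ} (hη : ∀ l, η l ∈ U) (hν : ∀ l, ν l ∈ U)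
    (hne : η ≠ ν) (hn : bound η ≤ n)
    (h : restrictAt ν (coord η) n = restrictAt η (coord η) n) : rank η < rank ν

theorem nonempty_pivotChoice {U : Set (ℕ → S)} (hU : #U ≤ ℵ_ k) : Nonempty (PivotChoice k U) := by
  obtain ⟨r, hr⟩ := exists_isLineFinite k hU
  have := hr.isWellOrder
  choose m N hmN using hr.exists_forall_restrictAt
  let coe (ζ : Fin (k + 1) → U) (l : Fin (k + 1)) : ℕ → S := ζ l
  have hcoe : Function.Injective coe := Subtype.val_injective.comp_left
  refine ⟨⟨Function.extend coe (Ordinal.typein r) 0, Function.extend coe m 0,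
    Function.extend coe N 0, ?_⟩⟩
  intro η ν n hη hν hne hn h
  lift η to Fin (k + 1) → U using hη
  lift ν to Fin (k + 1) → U using hν
  rw [hcoe.extend_apply] at hn h
  rw [hcoe.extend_apply, hcoe.extend_apply, Ordinal.typein_lt_typein]
  exact hmN η ν (ne_of_apply_ne coe hne) n hn h

variable {Λ : Set (Fin (k + 1) → ℕ → S)} (a : ↥Λ → ℕ → ℤ) (U : Set (ℕ → S))

/-- The defining relation of `G_x` indexed by `(η, n)`, as a vector of integer coefficients. -/
noncomputable def relVec (j : ↥Λ × ℕ) : Gen k S Λ →₀ ℤ :=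
  FreeAbelianGroup.toFinsupp (relEl a j.1 j.2)

theorem relVec_apply [DecidableEq (Gen k S Λ)] (η : ↥Λ) (n : ℕ) (g : Gen k S Λ) :
    relVec a (η, n) g =
      (if Gen.Y η (n + 1) = g then (n.factorial : ℤ) else 0) - (if Gen.Y η n = g then 1 else 0)
        - (if Gen.Z = g then a η n else 0)
        - ∑ m, if Gen.X (resMem η m n) = g then 1 else 0 := by
  simp [relVec, relEl, Finsupp.single_apply]

theorem relVec_Y_succ (η : ↥Λ) (n : ℕ) : relVec a (η, n) (.Y η (n + 1)) = n.factorial := by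
  classical simp [relVec_apply]

theorem relVec_Y_self (η : ↥Λ) (n : ℕ) : relVec a (η, n) (.Y η n) = -1 := by
  classical simp [relVec_apply]

theorem relVec_X_resMem (η : ↥Λ) (m : Fin (k + 1)) (n : ℕ) :
    relVec a (η, n) (.X (resMem η m n)) = -1 := by
  classical
  have hm (m' : Fin (k + 1)) : resMem η m' n = resMem η m n ↔ m' = m :=
    ⟨fun h => (eq_and_eq_of_restrictAt_eq (congrArg Subtype.val h)).1, fun h => h ▸ rfl⟩
  simp [relVec_apply, hm]

theorem eq_of_relVec_Y_ne_zero {η η' : ↥Λ} {n n' : ℕ} (h : relVec a (η, n) (.Y η' n') ≠ 0) :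
    η' = η ∧ (n' = n ∨ n' = n + 1) := by
  classical
  simp only [relVec_apply, Gen.Y.injEq, reduceCtorEq, if_false, Finset.sum_const_zero] at h
  grind

theorem exists_eq_of_relVec_X_ne_zero {η : ↥Λ} {n : ℕ} {ν : ↥(LambdaRes Λ)}
    (h : relVec a (η, n) (.X ν) ≠ 0) : ∃ m, ν = resMem η m n := by
  classical
  contrapose! h
  simp [relVec_apply, fun m => (h m).symm]

/-- The generators of `G_x` that generate `G_U`. -/
def gensIn : Set (Gen k S Λ)
  | .X ν => ∃ η m n, (∀ l, η l ∈ U) ∧ (ν : Res k S) = restrictAt η m n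
  | .Y η _ => ∀ l, (η : Fin (k + 1) → ℕ → S) l ∈ U
  | .Z => True

theorem support_relVec_subset_gensIn {U : Set (ℕ → S)} {η : ↥Λ}
    (hη : ∀ l, (η : Fin (k + 1) → ℕ → S) l ∈ U) (n : ℕ) :
    ↑(relVec a (η, n)).support ⊆ gensIn (Λ := Λ) U := by
  intro g hg
  have hg : relVec a (η, n) g ≠ 0 := Finsupp.mem_support_iff.1 hg
  cases g with
  | X ν =>
    obtain ⟨m, rfl⟩ := exists_eq_of_relVec_X_ne_zero a hg
    exact ⟨η, m, n, hη, rfl⟩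
  | Y η' n' =>
    obtain ⟨rfl, -⟩ := eq_of_relVec_Y_ne_zero a hg
    exact hη
  | Z => trivial

namespace PivotChoice

variable {U} (p : PivotChoice k U)

open Classical in
/-- The generator eliminated by means of the relation `(η, n)`. Its coefficient is `-1` if `η` is
contained in `U`; otherwise it is `y_{η,n+1}`, which is not one of the generators of `G_U`. -/
noncomputable def pivot (j : ↥Λ × ℕ) : Gen k S Λ :=
  if ∀ l, (j.1 : Fin (k + 1) → ℕ → S) l ∈ U then
    if p.bound j.1 ≤ j.2 then .X (resMem j.1 (p.coord j.1) j.2) else .Y j.1 j.2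
  else .Y j.1 (j.2 + 1)

open Classical in
/-- The level of the relation `(η, n)` with respect to `PivotChoice.pivot`: the relations whose
pivot is some `x_ν` come first, in the order given by `rank`. Among the others, only those of the
same `η` interact, and they are ordered by decreasing `n` if `η` is contained in `U` and by
increasing `n` otherwise. -/
noncomputable def level (j : ↥Λ × ℕ) : WithTop Ordinal.{u} ×ₗ ℕ :=
  if ∀ l, (j.1 : Fin (k + 1) → ℕ → S) l ∈ U then
    if p.bound j.1 ≤ j.2 then toLex (↑(p.rank j.1), 0) else toLex (⊤, p.bound j.1 - j.2)
  else toLex (⊤, j.2)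

theorem isUnit_relVec_pivot {j : ↥Λ × ℕ} (hj : ∀ l, (j.1 : Fin (k + 1) → ℕ → S) l ∈ U) :
    IsUnit (relVec a j (p.pivot j)) := by
  obtain ⟨η, n⟩ := j
  rw [pivot, if_pos hj]
  split_ifs
  · exact (relVec_X_resMem a η _ n).symm ▸ isUnit_one.neg
  · exact (relVec_Y_self a η n).symm ▸ isUnit_one.neg

theorem relVec_pivot_ne_zero (j : ↥Λ × ℕ) : relVec a j (p.pivot j) ≠ 0 := by
  by_cases hj : ∀ l, (j.1 : Fin (k + 1) → ℕ → S) l ∈ U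
  · exact (p.isUnit_relVec_pivot a hj).ne_zero
  · rw [pivot, if_neg hj, relVec_Y_succ]
    exact_mod_cast j.2.factorial_ne_zero

theorem mem_of_pivot_mem_gensIn {j : ↥Λ × ℕ} (hj : p.pivot j ∈ gensIn U) :
    ∀ l, (j.1 : Fin (k + 1) → ℕ → S) l ∈ U := by
  by_contra h
  rw [pivot, if_neg h] at hj
  exact h hj

theorem level_lt_level_of_bound_le {η η' : ↥Λ} {n : ℕ}
    (hη : ∀ l, (η : Fin (k + 1) → ℕ → S) l ∈ U) (hn : p.bound η ≤ n) (hne : η ≠ η')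
    (h : resMem η (p.coord η) n = resMem η' (p.coord η) n) :
    p.level (η, n) < p.level (η', n) := by
  rw [level, level, if_pos hη, if_pos hn]
  split_ifs with hη'
  · exact Prod.Lex.left _ _ (WithTop.coe_lt_coe.2
      (p.rank_lt hη hη' (Subtype.coe_injective.ne hne) hn (congrArg Subtype.val h).symm))
  · exact Prod.Lex.left _ _ (WithTop.coe_lt_top _)
  · exact Prod.Lex.left _ _ (WithTop.coe_lt_top _)

theorem isTriangular : IsTriangular (relVec a) p.pivot p.level where
  pivot_ne_zero := p.relVec_pivot_ne_zero a
  level_lt := by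
    rintro ⟨η', n'⟩ ⟨η, n⟩ hne h
    by_cases hη' : ∀ l, (η' : Fin (k + 1) → ℕ → S) l ∈ U
    · by_cases hn' : p.bound η' ≤ n'
      · rw [pivot, if_pos hη', if_pos hn'] at h
        obtain ⟨m, hm⟩ := exists_eq_of_relVec_X_ne_zero a h
        obtain ⟨rfl, rfl⟩ := eq_and_eq_of_restrictAt_eq (congrArg Subtype.val hm)
        exact p.level_lt_level_of_bound_le hη' hn' (by rintro rfl; exact hne rfl) hm
      · rw [pivot, if_pos hη', if_neg hn'] at h
        obtain ⟨rfl, rfl | rfl⟩ := eq_of_relVec_Y_ne_zero a h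
        · exact absurd rfl hne
        · rw [level, level, if_pos hη', if_neg hn', if_pos hη', if_neg (by grind)]
          exact Prod.Lex.right _ (by grind)
    · rw [pivot, if_neg hη'] at h
      obtain ⟨rfl, h | h⟩ := eq_of_relVec_Y_ne_zero a h
      · rw [level, level, if_neg hη', if_neg hη']
        exact Prod.Lex.right _ (by grind)
      · exact absurd (by grind) hne

end PivotChoice

/-- The image in `G_x` of a generator, so that `xg`, `yg` and `zg` are its values at the three kinds
of generators. -/
def genMap (g : Gen k S Λ) : Gx a :=
  QuotientAddGroup.mk (FreeAbelianGroup.of g)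

theorem linearCombination_genMap (v : Gen k S Λ →₀ ℤ) :
    Finsupp.linearCombination ℤ (genMap a) v =
      QuotientAddGroup.mk' (relSub a) (Finsupp.toFreeAbelianGroup v) := by
  induction v using Finsupp.induction_linear with
  | zero => simp
  | add v w hv hw => simp only [map_add, hv, hw]
  | single g c => simp [genMap, Finsupp.toFreeAbelianGroup]

theorem map_relSub :
    (relSub a).map FreeAbelianGroup.toFinsupp = AddSubgroup.closure (Set.range (relVec a)) := by
  rw [relSub, AddMonoidHom.map_closure]
  congr 1
  ext v
  simp [relVec, eq_comm]

theorem ker_linearCombination_genMap :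
    LinearMap.ker (Finsupp.linearCombination ℤ (genMap a)) =
      Submodule.span ℤ (Set.range (relVec a)) := by
  ext v
  rw [LinearMap.mem_ker, linearCombination_genMap, QuotientAddGroup.mk'_apply,
    QuotientAddGroup.eq_zero_iff, ← Submodule.mem_toAddSubgroup,
    Submodule.span_int_eq_addSubgroupClosure, ← map_relSub]
  exact AddSubgroup.mem_map_equiv (f := FreeAbelianGroup.equivFinsupp _) |>.symm

theorem GU_eq_span :
    GU a U = (Submodule.span ℤ (genMap a '' gensIn U)).toAddSubgroup := by
  rw [Submodule.span_int_eq_addSubgroupClosure, GU]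
  congr 1
  ext x
  constructor
  · rintro ((rfl | ⟨η, n, hη, rfl⟩) | ⟨η, m, n, ν, hη, hν, rfl⟩)
    · exact ⟨.Z, trivial, rfl⟩
    · exact ⟨.Y η n, hη, rfl⟩
    · exact ⟨.X ν, ⟨η, m, n, hη, hν⟩, rfl⟩
  · rintro ⟨ν | ⟨η, n⟩ | _, hg, rfl⟩
    · obtain ⟨η, m, n, hη, hν⟩ := hg
      exact .inr ⟨η, m, n, ν, hη, hν, rfl⟩
    · exact .inl (.inr ⟨η, n, hg, rfl⟩)
    · exact .inl (.inl rfl)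

theorem PivotChoice.free_GU {U : Set (ℕ → S)} (p : PivotChoice k U) : Module.Free ℤ (GU a U) := by
  rw [GU_eq_span]
  exact (p.isTriangular a).free_span_image (ker_linearCombination_genMap a)
    (fun _ hj => p.isUnit_relVec_pivot a (p.mem_of_pivot_mem_gensIn hj))
    (fun _ hj => support_relVec_subset_gensIn a (p.mem_of_pivot_mem_gensIn hj) _)

end Sh883

open Sh883 in
/-- Let `x = (S, Λ, a)` be an abelian-group `k`-parameter and let `U` be a
set of functions `ℕ → S` of cardinality at most `ℵ_k`. Then the subgroup `G_U` of `G_x`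
is a free abelian group. -/
theorem stmt6 {k : ℕ} {S : Type u} (Λ : Set (Fin (k + 1) → ℕ → S)) (a : ↥Λ → ℕ → ℤ)
    (U : Set (ℕ → S)) (hU : #U ≤ Cardinal.aleph k) :
    Module.Free ℤ (GU a U) := by
  obtain ⟨p⟩ := nonempty_pivotChoice hU
  exact p.free_GU a
end

section
/- Let x = (S, Λ, a) be an abelian-group k-parameter whose underlying combinatorial k-parameter (S, Λ) is free. Then G_x is a free abelian group. -/
open Cardinal

namespace Sh883

/-- Freeness of a combinatorial `k`-parameter `(S, Λ)`: there is an enumeration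
`⟨η̄^α : α < α*⟩` of `Λ` without repetitions such that for every `α` there are `m ≤ k`
and `n ∈ ℕ` with `η̄^α↾⟨m,n⟩ ∉ {η̄^β↾⟨m,n⟩ : β < α}`. -/
def CombFree {k : ℕ} {S : Type u} (Λ : Set (Fin (k + 1) → ℕ → S)) : Prop :=
  ∃ (o : Ordinal.{u}) (e : Set.Iio o → (Fin (k + 1) → ℕ → S)),
    Function.Injective e ∧ Set.range e = Λ ∧
    ∀ α : Set.Iio o, ∃ (m : Fin (k + 1)) (n : ℕ),
      ∀ β : Set.Iio o, (β : Ordinal) < (α : Ordinal) →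
        restrictAt (e α) m n ≠ restrictAt (e β) m n

end Sh883

/-!
Fix for each `η̄ ∈ Λ` a coordinate `m` and a level `N` at which `η̄` differs from all its
predecessors. Use the `n`-th relation of `η̄` to eliminate the generator `x_{η̄↾⟨m,n⟩}` if
`N ≤ n`, and `y_{η̄,n}` if `n < N`; both occur with coefficient `-1`. Substituting terminates,
because any other eliminated generator in this relation is either an `x` eliminated by a predecessor
of `η̄`, or `y_{η̄,n+1}` with `n + 1 < N`. So the generators that are never eliminated form a basis
of `G_x`.
-/

namespace Sh883

section Pivots

open Module Submodule

/-- A system of pivots for the relations `v r`, expressed in the basis `b`: the coefficient of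
`v r` at its own pivot `p r` is a unit, and any other pivot occurring in `v r` belongs to a relation
of smaller rank. Coefficients at basis elements that are not pivots are unconstrained. -/
structure IsPivotSystem {ι ρ R M α : Type*} [Ring R] [AddCommGroup M] [Module R M] [LT α]
    (b : Basis ι R M) (v : ρ → M) (p : ρ → ι) (rank : ρ → α) : Prop where
  isUnit_repr_pivot (r : ρ) : IsUnit (b.repr (v r) (p r))
  rank_lt {r s : ρ} (hne : s ≠ r) (hs : b.repr (v r) (p s) ≠ 0) : rank s < rank r

variable {ι ρ R M α : Type*} [Ring R] [AddCommGroup M] [Module R M] [Preorder α]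
  {b : Basis ι R M} {v : ρ → M} {p : ρ → ι} {rank : ρ → α}

theorem IsPivotSystem.eq_zero_of_repr_linearCombination_eq_zero (h : IsPivotSystem b v p rank)
    {c : ρ →₀ R} (hc : ∀ s, b.repr (Finsupp.linearCombination R v c) (p s) = 0) : c = 0 := by
  by_contra hne
  obtain ⟨r, hr, hmax⟩ :=
    c.support.exists_maximalFor rank (Finsupp.support_nonempty_iff.mpr hne)
  have hother : ∀ s ∈ c.support, s ≠ r → c s * b.repr (v s) (p r) = 0 := fun s hs hsr ↦ by
    by_contra hmul
    have hlt := h.rank_lt hsr.symm (right_ne_zero_of_mul hmul)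
    exact hlt.not_ge (hmax hs hlt.le)
  have hcoeff : c r * b.repr (v r) (p r) = 0 := by
    rw [← hc r, Finsupp.linearCombination_apply, Finsupp.sum, map_sum, Finsupp.finsetSum_apply,
      Finset.sum_eq_single_of_mem r hr]
    · simp
    · simpa using hother
  exact Finsupp.mem_support_iff.mp hr ((h.isUnit_repr_pivot r).mul_left_eq_zero.mp hcoeff)

theorem IsPivotSystem.disjoint (h : IsPivotSystem b v p rank) :
    Disjoint (span R (Set.range v)) (span R (b '' (Set.range p)ᶜ)) := by
  rw [disjoint_def]
  intro x hv hb
  obtain ⟨c, rfl⟩ := Finsupp.mem_span_range_iff_exists_finsupp.mp hv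
  rw [b.mem_span_image] at hb
  have hc : c = 0 := h.eq_zero_of_repr_linearCombination_eq_zero fun s ↦ by
    by_contra hs
    exact hb (Finsupp.mem_support_iff.mpr hs) ⟨s, rfl⟩
  simp [hc]

theorem basis_mem_of_isUnit_repr_of_forall_ne {N : Submodule R M} {x : M} {i : ι}
    (hi : IsUnit (b.repr x i)) (hx : x ∈ N)
    (hN : ∀ j ≠ i, b.repr x j ≠ 0 → b j ∈ N) : b i ∈ N := by
  have hsum : b.repr x i • b i + ((b.repr x).erase i).sum (fun j c ↦ c • b j) = x := by
    rw [Finsupp.add_sum_erase' _ _ (fun j c ↦ c • b j) fun j ↦ zero_smul R (b j)]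
    exact b.linearCombination_repr x
  have hrest : ((b.repr x).erase i).sum (fun j c ↦ c • b j) ∈ N := sum_mem fun j hj ↦ by
    obtain ⟨hji, hj⟩ : j ≠ i ∧ b.repr x j ≠ 0 := by
      classical simpa [Finsupp.erase_apply] using hj
    exact N.smul_mem _ (hN j hji hj)
  have hsmul : b.repr x i • b i ∈ N := by
    rw [eq_sub_of_add_eq hsum]
    exact sub_mem hx hrest
  exact (N.smul_mem_iff_of_isUnit hi).mp hsmul

theorem IsPivotSystem.codisjoint [WellFoundedLT α] (h : IsPivotSystem b v p rank) :
    Codisjoint (span R (Set.range v)) (span R (b '' (Set.range p)ᶜ)) := by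
  set N := span R (Set.range v) ⊔ span R (b '' (Set.range p)ᶜ)
  have hcompl : ∀ i ∉ Set.range p, b i ∈ N := fun i hi ↦
    mem_sup_right (subset_span ⟨i, hi, rfl⟩)
  have hpivot : ∀ r, b (p r) ∈ N := fun r ↦ by
    induction r using (InvImage.wf rank wellFounded_lt).induction with
    | _ r ih =>
      refine basis_mem_of_isUnit_repr_of_forall_ne (h.isUnit_repr_pivot r)
        (mem_sup_left (subset_span ⟨r, rfl⟩)) fun j hj hcoeff ↦ ?_
      by_cases hjp : j ∈ Set.range p
      · obtain ⟨s, rfl⟩ := hjp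
        exact ih s (h.rank_lt (fun hsr ↦ hj (congrArg p hsr)) hcoeff)
      · exact hcompl j hjp
  rw [codisjoint_iff, eq_top_iff, ← b.span_eq, span_le]
  rintro _ ⟨i, rfl⟩
  by_cases hi : i ∈ Set.range p
  · obtain ⟨r, rfl⟩ := hi
    exact hpivot r
  · exact hcompl i hi

theorem IsPivotSystem.free_quotient [WellFoundedLT α] (h : IsPivotSystem b v p rank) :
    Free R (M ⧸ span R (Set.range v)) := by
  have hli : LinearIndependent R fun i : ↥(Set.range p)ᶜ ↦ b i :=
    b.linearIndependent.comp _ Subtype.val_injective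
  have hfree : Free R (span R (b '' (Set.range p)ᶜ)) := by
    rw [Set.image_eq_range]
    exact .of_basis (Basis.span hli)
  exact .of_equiv (quotientEquivOfIsCompl _ _ ⟨h.disjoint, h.codisjoint⟩).symm

end Pivots

section Restrictions

variable {k : ℕ} {S : Type*} {η η' : Fin (k + 1) → ℕ → S} {m m' : Fin (k + 1)} {n n' : ℕ}

theorem coord_eq_of_restrictAt_eq (h : restrictAt η m n = restrictAt η' m' n') : m = m' :=
  congrArg Res.m h

theorem length_eq_of_restrictAt_eq (h : restrictAt η m n = restrictAt η' m' n') : n = n' := by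
  simpa [restrictAt] using congrArg (fun ν ↦ ν.seq.length) h

theorem restrictAt_eq_of_le (hn : n ≤ n') (h : restrictAt η m n' = restrictAt η' m n') :
    restrictAt η m n = restrictAt η' m n := by
  simp only [restrictAt, Res.mk.injEq, heq_eq_eq, true_and] at h ⊢
  have hseq := List.ofFn_injective h.1
  exact ⟨congrArg List.ofFn (funext fun i ↦ congrFun hseq (i.castLE hn)), h.2⟩

end Restrictions

/-- The data witnessing freeness of `(S, Λ)`, indexed by `Λ` itself: `index` is the position of a
tuple in the enumeration, and `coord η̄`, `level η̄` are the `m` and `n` at which `η̄↾⟨m,n⟩` differs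
from the restrictions of all earlier tuples. -/
structure IsFreshSystem {k : ℕ} {S α : Type*} [LT α] {Λ : Set (Fin (k + 1) → ℕ → S)}
    (index : Λ → α) (coord : Λ → Fin (k + 1)) (level : Λ → ℕ) : Prop where
  index_injective : Function.Injective index
  restrictAt_ne {η η' : Λ} (hlt : index η' < index η) :
    restrictAt η.1 (coord η) (level η) ≠ restrictAt η'.1 (coord η) (level η)

theorem CombFree.exists_isFreshSystem {k : ℕ} {S : Type u} {Λ : Set (Fin (k + 1) → ℕ → S)}
    (hfree : CombFree Λ) :
    ∃ (index : Λ → Ordinal.{u}) (coord : Λ → Fin (k + 1)) (level : Λ → ℕ),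
      IsFreshSystem index coord level := by
  obtain ⟨o, e, -, rfl, hfresh⟩ := hfree
  choose coord level hne using hfresh
  choose position he using fun η : Set.range e ↦ η.2
  refine ⟨fun η ↦ position η, fun η ↦ coord (position η), fun η ↦ level (position η), ?_, ?_⟩
  · intro η η' h
    rw [Subtype.ext_iff, ← he η, ← he η', Subtype.ext h]
  · intro η η' hlt
    simpa only [he] using hne (position η) (position η') hlt

section Relations

open FreeAbelianGroup

variable {k : ℕ} {S : Type*} {Λ : Set (Fin (k + 1) → ℕ → S)}

theorem resMem_coord_injective (η : Λ) (n : ℕ) :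
    Function.Injective fun m ↦ resMem η m n :=
  fun _ _ h ↦ coord_eq_of_restrictAt_eq (congrArg Subtype.val h)

open scoped Classical in
theorem repr_relEl (a : Λ → ℕ → ℤ) (η : Λ) (n : ℕ) (g : Gen k S Λ) :
    (FreeAbelianGroup.basis _).repr (relEl a η n) g =
      n.factorial * (if g = .Y η (n + 1) then 1 else 0) - (if g = .Y η n then 1 else 0)
        - a η n * (if g = .Z then 1 else 0)
        - ∑ m, if g = .X (resMem η m n) then 1 else 0 := by
  have hof (g' : Gen k S Λ) :
      (FreeAbelianGroup.basis _).repr (of g') = Finsupp.single g' 1 := toFinsupp_of g'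
  simp [relEl, hof, Finsupp.single_apply, eq_comm]

theorem repr_relEl_Y_self (a : Λ → ℕ → ℤ) (η : Λ) (n : ℕ) :
    (FreeAbelianGroup.basis _).repr (relEl a η n) (.Y η n) = -1 := by
  simp [repr_relEl]

theorem repr_relEl_X_resMem (a : Λ → ℕ → ℤ) (η : Λ) (m : Fin (k + 1)) (n : ℕ) :
    (FreeAbelianGroup.basis _).repr (relEl a η n) (.X (resMem η m n)) = -1 := by
  simp [repr_relEl, (resMem_coord_injective η n).eq_iff]

theorem eq_of_repr_relEl_ne_zero {a : Λ → ℕ → ℤ} {η : Λ} {n : ℕ} {g : Gen k S Λ}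
    (hg : (FreeAbelianGroup.basis _).repr (relEl a η n) g ≠ 0) :
    g = .Y η (n + 1) ∨ g = .Y η n ∨ g = .Z ∨ ∃ m, g = .X (resMem η m n) := by
  contrapose! hg
  obtain ⟨hY', hY, hZ, hX⟩ := hg
  simp [repr_relEl, hY', hY, hZ, hX]

theorem relSub_eq_toAddSubgroup_span (a : Λ → ℕ → ℤ) :
    relSub a =
      (Submodule.span ℤ (Set.range fun r : Λ × ℕ ↦ relEl a r.1 r.2)).toAddSubgroup := by
  rw [Submodule.span_int_eq_addSubgroupClosure, relSub]
  congr 1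
  ext g
  simp [eq_comm]

/-- The generator eliminated by the `n`-th relation of `η̄`, as a function of the pair `(η̄, n)`. -/
def pivot (coord : Λ → Fin (k + 1)) (level : Λ → ℕ) (r : Λ × ℕ) : Gen k S Λ :=
  if r.2 < level r.1 then .Y r.1 r.2 else .X (resMem r.1 (coord r.1) r.2)

/-- The rank of the `n`-th relation of `η̄` in the order of elimination: first the position of `η̄`
in the enumeration, then the distance from `n` up to `level η̄`. The truncated subtraction makes
this distance `0` beyond the level. -/
def pivotRank {α : Type*} (index : Λ → α) (level : Λ → ℕ) (r : Λ × ℕ) : α ×ₗ ℕ :=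
  toLex (index r.1, level r.1 - r.2)

variable {α : Type*} [LinearOrder α] {index : Λ → α} {coord : Λ → Fin (k + 1)} {level : Λ → ℕ}

theorem eq_and_lt_level_of_pivot_eq_Y {r : Λ × ℕ} {η : Λ} {n : ℕ}
    (h : pivot coord level r = .Y η n) : r = (η, n) ∧ n < level η := by
  unfold pivot at h
  split_ifs at h with hlt
  grind

theorem level_le_and_resMem_eq_of_pivot_eq_X {r : Λ × ℕ} {ν : LambdaRes Λ}
    (h : pivot coord level r = .X ν) : level r.1 ≤ r.2 ∧ resMem r.1 (coord r.1) r.2 = ν := by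
  unfold pivot at h
  split_ifs at h with hlt
  exact ⟨not_lt.mp hlt, Gen.X.inj h⟩

theorem pivot_ne_Z (r : Λ × ℕ) : pivot coord level r ≠ .Z := by
  unfold pivot
  split_ifs <;> simp

theorem isUnit_repr_relEl_pivot (a : Λ → ℕ → ℤ) (r : Λ × ℕ) :
    IsUnit ((FreeAbelianGroup.basis _).repr (relEl a r.1 r.2) (pivot coord level r)) := by
  unfold pivot
  split_ifs
  · simp [repr_relEl_Y_self]
  · simp [repr_relEl_X_resMem]

theorem IsFreshSystem.index_lt (h : IsFreshSystem index coord level) {η η' : Λ} (hne : η' ≠ η)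
    {m : Fin (k + 1)} {n : ℕ} (hn : level η' ≤ n)
    (heq : restrictAt η'.1 (coord η') n = restrictAt η.1 m n) : index η' < index η := by
  by_contra hnot
  have hlt : index η < index η' := lt_of_le_of_ne (not_lt.mp hnot) (h.index_injective.ne hne.symm)
  obtain rfl := coord_eq_of_restrictAt_eq heq
  exact h.restrictAt_ne hlt (restrictAt_eq_of_le hn heq)

theorem IsFreshSystem.pivotRank_lt (h : IsFreshSystem index coord level) {a : Λ → ℕ → ℤ}
    {r s : Λ × ℕ} (hne : s ≠ r)
    (hs : (FreeAbelianGroup.basis _).repr (relEl a r.1 r.2) (pivot coord level s) ≠ 0) :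
    pivotRank index level s < pivotRank index level r := by
  obtain ⟨η, n⟩ := r
  rw [pivotRank, pivotRank, Prod.Lex.toLex_lt_toLex]
  rcases eq_of_repr_relEl_ne_zero hs with hY' | hY | hZ | ⟨m, hX⟩
  · obtain ⟨rfl, hlevel⟩ := eq_and_lt_level_of_pivot_eq_Y hY'
    exact .inr ⟨rfl, by dsimp only at hlevel ⊢; omega⟩
  · exact absurd (eq_and_lt_level_of_pivot_eq_Y hY).1 hne
  · exact absurd hZ (pivot_ne_Z s)
  · obtain ⟨η', n'⟩ := s
    obtain ⟨hlevel, hres⟩ := level_le_and_resMem_eq_of_pivot_eq_X hX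
    have heq := congrArg Subtype.val hres
    obtain rfl := length_eq_of_restrictAt_eq heq
    exact .inl (h.index_lt (fun hη ↦ hne (congrArg (·, _) hη)) hlevel heq)

theorem IsFreshSystem.isPivotSystem (h : IsFreshSystem index coord level) (a : Λ → ℕ → ℤ) :
    IsPivotSystem (FreeAbelianGroup.basis (Gen k S Λ)) (fun r : Λ × ℕ ↦ relEl a r.1 r.2)
      (pivot coord level) (pivotRank index level) where
  isUnit_repr_pivot := isUnit_repr_relEl_pivot a
  rank_lt := h.pivotRank_lt

end Relations

end Sh883

open Sh883 in
/-- Let `x = (S, Λ, a)` be an abelian-group `k`-parameter whose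
underlying combinatorial `k`-parameter `(S, Λ)` is free.  Then `G_x` is a free abelian
group. -/
theorem stmt8 {k : ℕ} {S : Type u} (Λ : Set (Fin (k + 1) → ℕ → S)) (a : ↥Λ → ℕ → ℤ)
    (hfree : CombFree Λ) :
    Module.Free ℤ (Gx a) := by
  obtain ⟨index, coord, level, hfresh⟩ := hfree.exists_isFreshSystem
  have hquot := (hfresh.isPivotSystem a).free_quotient
  change Module.Free ℤ (_ ⧸ relSub a)
  rw [relSub_eq_toAddSubgroup_span]
  exact hquot
end

section
/- Let x = (S, Λ, a) be a full abelian-group k-parameter (Λ consists of all (k+1)-tuples of functions from ℕ to S). If U is a set of functions from ℕ to S whose cardinality is at least the (k+1)-fold cardinal successor (|S| + ℵ_0)^{+(k+1)} of |S| + ℵ_0, then the subgroup G_U of G_x is not a free abelian group. -/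
open Cardinal

/-!
Suppose `G_U` is free with basis `b`, and call a set small if it has size at most `|S| + ℵ₀`.
Closing off under supports of basis expansions, every small `W₀` is contained in a small `W` such
that `G_W ∩ G_U` is spanned by part of `b`; sums of such subgroups are again spanned by part of `b`.
Let `W₀` consist of `k` functions and a small dense set of functions. The free set theorem of
Kuratowski and Sierpiński provides a tuple `η̄` in `U` such that, for each `m`, `η_m` is not in the
set `W_m` obtained from the other `k` coordinates. Density gives `x_{η̄↾⟨m,n⟩} ∈ G_{W_m}`, so modulo
`H = Σ_m (G_{W_m} ∩ G_U)` the relations read `n! y_{η̄,n+1} = y_{η̄,n}`. As `G_U / H` is free, this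
forces `y_{η̄,0} ∈ H`. But the homomorphism to `ℚ` that kills every generator except the `y_{η̄,n}`
vanishes on `H` and not at `y_{η̄,0}`.
-/

namespace Sh883

section SmallSets

variable {α : Type u} {μ : Cardinal.{u}}

theorem mk_iUnion_le_of_le {ι : Type v} {A : ι → Set α} (hμ : ℵ₀ ≤ μ)
    (hι : lift.{u} #ι ≤ lift.{v} μ) (hA : ∀ i, #(A i) ≤ μ) : #(⋃ i, A i) ≤ μ := by
  rw [← lift_le.{v}]
  calc lift.{v} #(⋃ i, A i)
      ≤ lift.{u} #ι * ⨆ i, lift.{v} #(A i) := mk_iUnion_le_lift A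
    _ ≤ lift.{v} μ * lift.{v} μ := mul_le_mul' hι (ciSup_le' fun i => lift_le.2 (hA i))
    _ = lift.{v} μ := mul_eq_self (aleph0_le_lift.2 hμ)

theorem mk_finset_le_max (α : Type u) : #(Finset α) ≤ max ℵ₀ #α := by
  classical
  exact (mk_le_of_surjective List.toFinset_surjective).trans (mk_list_le_max α)

theorem mk_fin_arrow_le (hα : ℵ₀ ≤ #α) (n : ℕ) : #(Fin n → α) ≤ #α := by
  simpa using power_nat_le (n := n) hα

theorem exists_forall_mem_notMem_removeNth (hμ : ℵ₀ ≤ μ) {k : ℕ} (f : (Fin k → α) → Set α)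
    (hf : ∀ t, #(f t) ≤ μ) (A : Set α) (hA : Order.succ^[k + 1] μ ≤ #A) :
    ∃ t : Fin (k + 1) → α, ∀ m, t m ∈ A ∧ t m ∉ f (m.removeNth t) := by
  induction k generalizing A with
  | zero =>
    obtain ⟨p, hpA, hpf⟩ := sdiff_nonempty_of_mk_lt_mk
      ((hf Fin.elim0).trans_lt ((Order.lt_succ μ).trans_le hA))
    exact ⟨fun _ => p, fun m => ⟨hpA, by convert hpf⟩⟩
  | succ k ih =>
    rw [Function.iterate_succ_apply'] at hA
    have hlt : Order.succ^[k + 1] μ < #A := (Order.lt_succ _).trans_le hA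
    -- All other coordinates are taken from `B`, so `p` only has to avoid `f` on tuples from `B`.
    obtain ⟨B, hBA, hB⟩ := le_mk_iff_exists_subset.1 hlt.le
    have hμB : μ ≤ #B := hB ▸ Order.le_succ_iterate (k + 1) μ
    have hCB : #(⋃ t : Fin (k + 1) → B, f fun i => t i) ≤ #B :=
      mk_iUnion_le_of_le (hμ.trans hμB) (lift_le.2 (mk_fin_arrow_le (hμ.trans hμB) _))
        fun t => (hf _).trans hμB
    obtain ⟨p, hpA, hpC⟩ := sdiff_nonempty_of_mk_lt_mk (hCB.trans_lt (hB ▸ hlt))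
    obtain ⟨t, ht⟩ := ih (fun t => f (Fin.cons p t)) (fun t => hf _) B hB.ge
    refine ⟨Fin.cons p t, Fin.cases ⟨hpA, fun hpf => hpC ?_⟩ fun m => ⟨hBA (ht m).1, ?_⟩⟩
    · exact Set.mem_iUnion.2 ⟨fun i => ⟨t i, (ht i).1⟩, hpf⟩
    · have hremove : m.succ.removeNth (Fin.cons p t : Fin (k + 2) → α)
          = Fin.cons p (m.removeNth t) := Fin.cons_comp_succ_succAbove p t m
      rw [hremove]
      exact (ht m).2

/-- One round of closing off `W` under a finitary set-valued operation `E`. -/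
def closeOffStep (E : Finset α → Set α) (W : Set α) : Set α :=
  W ∪ ⋃ s : Finset W, E (s.map (Function.Embedding.subtype _))

theorem subset_closeOffStep (E : Finset α → Set α) {W : Set α} {s : Finset α}
    (hs : (s : Set α) ⊆ W) : E s ⊆ closeOffStep E W := by
  classical
  have hmap : (s.subtype (· ∈ W)).map (Function.Embedding.subtype _) = s :=
    Finset.subtype_map_of_mem fun _ hx => hs hx
  intro x hx
  exact Or.inr (Set.mem_iUnion.2 ⟨s.subtype (· ∈ W), hmap.symm ▸ hx⟩)

theorem mk_closeOffStep_le (hμ : ℵ₀ ≤ μ) {E : Finset α → Set α} (hE : ∀ s, #(E s) ≤ μ)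
    {W : Set α} (hW : #W ≤ μ) : #(closeOffStep E W) ≤ μ :=
  (mk_union_le _ _).trans <| add_le_of_le hμ hW <|
    mk_iUnion_le_of_le hμ (lift_le.2 ((mk_finset_le_max W).trans (max_le hμ hW))) fun _ => hE _

theorem exists_superset_closed (hμ : ℵ₀ ≤ μ) {E : Finset α → Set α} (hE : ∀ s, #(E s) ≤ μ)
    {W₀ : Set α} (hW₀ : #W₀ ≤ μ) :
    ∃ W : Set α, W₀ ⊆ W ∧ #W ≤ μ ∧ ∀ s : Finset α, (s : Set α) ⊆ W → E s ⊆ W := by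
  let V : ℕ → Set α := fun n => (closeOffStep E)^[n] W₀
  have hV_succ (n : ℕ) : V (n + 1) = closeOffStep E (V n) := Function.iterate_succ_apply' ..
  have hV_mono : Monotone V := monotone_nat_of_le_succ fun n =>
    (hV_succ n).symm ▸ Set.subset_union_left
  have hV_card (n : ℕ) : #(V n) ≤ μ := by
    induction n with
    | zero => exact hW₀
    | succ n ih => exact (hV_succ n).symm ▸ mk_closeOffStep_le hμ hE ih
  refine ⟨⋃ n, V n, Set.subset_iUnion V 0, mk_iUnion_le_of_le hμ (by simpa using hμ) hV_card,
    fun s hs => ?_⟩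
  obtain ⟨n, hn⟩ := hV_mono.directed_le.exists_mem_subset_of_finset_subset_biUnion hs
  exact ((subset_closeOffStep E hn).trans (hV_succ n).ge).trans (Set.subset_iUnion V (n + 1))

theorem exists_dense_set_mk_le (S : Type u) :
    ∃ D : Set (ℕ → S), #D ≤ max ℵ₀ #S ∧ ∀ (f : ℕ → S) (n : ℕ), ∃ g ∈ D, ∀ i < n, g i = f i := by
  let initial : (ℕ → S) × ℕ → List S := fun p => List.ofFn fun i : Fin p.2 => p.1 i
  refine ⟨Set.range fun l : Set.range initial => (Set.rangeSplitting initial l).1,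
    mk_range_le.trans ((mk_set_le _).trans (mk_list_le_max S)), fun f n => ?_⟩
  let l : Set.range initial := ⟨initial (f, n), Set.mem_range_self _⟩
  refine ⟨_, ⟨l, rfl⟩, fun i hi => ?_⟩
  have hsplit : initial (Set.rangeSplitting initial l) = initial (f, n) :=
    Set.apply_rangeSplitting initial l
  have hget := congrArg (fun l => l[i]?) hsplit
  have hlength : (Set.rangeSplitting initial l).2 = n := by
    simpa [initial] using congrArg List.length hsplit
  simpa [initial, hlength, hi] using hget

end SmallSets

section Subbasis

variable {R M ι : Type*} [Ring R] [AddCommGroup M] [Module R M]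

/-- `H` is spanned by a subset of the basis `b`. In that case `b` induces a basis of `M ⧸ H`. -/
def IsSpannedBySubbasis (b : Module.Basis ι R M) (H : Submodule R M) : Prop :=
  ∃ I : Set ι, H = Submodule.span R (b '' I)

theorem isSpannedBySubbasis_of_support {b : Module.Basis ι R M} {H : Submodule R M}
    (h : ∀ g ∈ H, ∀ i ∈ (b.repr g).support, b i ∈ H) : IsSpannedBySubbasis b H :=
  ⟨{i | b i ∈ H}, le_antisymm (fun g hg => b.mem_span_image.2 (h g hg))
    (Submodule.span_le.2 (Set.image_subset_iff.2 fun _ hi => hi))⟩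

theorem IsSpannedBySubbasis.iSup {b : Module.Basis ι R M} {κ : Sort*} {H : κ → Submodule R M}
    (h : ∀ m, IsSpannedBySubbasis b (H m)) : IsSpannedBySubbasis b (⨆ m, H m) := by
  choose I hI using h
  exact ⟨⋃ m, I m, by simp only [hI, Set.image_iUnion, Submodule.span_iUnion]⟩

theorem exists_superset_isSpannedBySubbasis {α : Type u} {μ : Cardinal.{u}} (hμ : ℵ₀ ≤ μ)
    (b : Module.Basis ι R M) {F : Set α → Submodule R M}
    (hF : ∀ W g, g ∈ F W ↔ ∃ s : Finset α, (s : Set α) ⊆ W ∧ g ∈ F s)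
    (hF_countable : ∀ s : Finset α, Countable (F s)) (hF_univ : F Set.univ = ⊤)
    {W₀ : Set α} (hW₀ : #W₀ ≤ μ) :
    ∃ W : Set α, W₀ ⊆ W ∧ #W ≤ μ ∧ IsSpannedBySubbasis b (F W) := by
  have hb (i : ι) : ∃ s : Finset α, b i ∈ F s := by
    obtain ⟨s, -, hs⟩ := (hF Set.univ (b i)).1 (hF_univ ▸ Submodule.mem_top)
    exact ⟨s, hs⟩
  choose T hT using hb
  let E : Finset α → Set α := fun s => ⋃ g : F s, ⋃ i ∈ (b.repr (g : M)).support, (T i : Set α)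
  have hE (s : Finset α) : #(E s) ≤ μ := by
    have hcountable : (E s).Countable := Set.countable_iUnion fun g =>
      (b.repr (g : M)).support.countable_toSet.biUnion fun i _ => (T i).countable_toSet
    exact (le_aleph0_iff_set_countable.2 hcountable).trans hμ
  obtain ⟨W, hW₀W, hWμ, hWE⟩ := exists_superset_closed hμ hE hW₀
  refine ⟨W, hW₀W, hWμ, isSpannedBySubbasis_of_support fun g hg i hi => ?_⟩
  obtain ⟨s, hsW, hgs⟩ := (hF W g).1 hg
  have hTE : (T i : Set α) ⊆ E s := fun f hf =>
    Set.mem_iUnion.2 ⟨⟨g, hgs⟩, Set.mem_biUnion hi hf⟩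
  exact (hF W (b i)).2 ⟨T i, hTE.trans (hWE s hsW), hT i⟩

end Subbasis

theorem prod_factorial_mul_eq_apply_zero {R : Type*} [CommSemiring R] {v : ℕ → R}
    (h : ∀ n, (n.factorial : R) * v (n + 1) = v n) (n : ℕ) :
    (∏ i ∈ Finset.range n, (i.factorial : R)) * v n = v 0 := by
  induction n with
  | zero => simp
  | succ n ih => rw [Finset.prod_range_succ, mul_assoc, h, ih]

theorem eq_zero_of_factorial_mul_succ_eq {v : ℕ → ℤ}
    (h : ∀ n, (n.factorial : ℤ) * v (n + 1) = v n) : v 0 = 0 := by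
  have hdvd (n : ℕ) : (n.factorial : ℤ) ∣ v 0 := by
    rw [← prod_factorial_mul_eq_apply_zero h (n + 1), Finset.prod_range_succ, mul_assoc]
    exact Dvd.dvd.mul_left (dvd_mul_right _ _) _
  refine Int.eq_zero_of_dvd_of_natAbs_lt_natAbs (hdvd ((v 0).natAbs + 1)) ?_
  exact (Nat.lt_succ_self _).trans_le (Nat.self_le_factorial _)

theorem IsSpannedBySubbasis.mem_of_factorial_smul_sub_mem {M ι : Type*} [AddCommGroup M]
    {b : Module.Basis ι ℤ M} {H : Submodule ℤ M} (hH : IsSpannedBySubbasis b H) {y : ℕ → M}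
    (hy : ∀ n, (n.factorial : ℤ) • y (n + 1) - y n ∈ H) : y 0 ∈ H := by
  obtain ⟨I, rfl⟩ := hH
  simp only [b.mem_span_image] at hy ⊢
  intro i hi
  by_contra hiI
  refine Finsupp.mem_support_iff.1 hi
    (eq_zero_of_factorial_mul_succ_eq (v := fun n => b.repr (y n) i) fun n => ?_)
  have hcoord : b.repr ((n.factorial : ℤ) • y (n + 1) - y n) i = 0 :=
    Finsupp.notMem_support_iff.1 fun hmem => hiI (hy n hmem)
  simpa [sub_eq_zero] using hcoord

theorem countable_closure {G : Type*} [AddCommGroup G] {s : Set G} (hs : s.Countable) :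
    Countable (AddSubgroup.closure s) := by
  have := hs.to_subtype
  have hspan : Countable (Submodule.span ℤ (Set.range ((↑) : s → G))) := inferInstance
  rwa [Subtype.range_coe, ← AddSubgroup.toIntSubmodule_closure] at hspan

section Parameter

variable {k : ℕ} {S : Type u} {Λ : Set (Fin (k + 1) → ℕ → S)} (a : ↥Λ → ℕ → ℤ)

theorem GU_le_iff {U : Set (ℕ → S)} {H : AddSubgroup (Gx a)} :
    GU a U ≤ H ↔ zg a ∈ H ∧
      (∀ (η : ↥Λ) (n : ℕ), (∀ l, η.1 l ∈ U) → yg a η n ∈ H) ∧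
      ∀ (η : Fin (k + 1) → ℕ → S) (m : Fin (k + 1)) (n : ℕ) (ν : ↥(LambdaRes Λ)),
        (∀ l, η l ∈ U) → ν.1 = restrictAt η m n → xg a ν ∈ H := by
  rw [GU, AddSubgroup.closure_le]
  constructor
  · exact fun h => ⟨h (.inl (.inl rfl)), fun η n hη => h (.inl (.inr ⟨η, n, hη, rfl⟩)),
      fun η m n ν hη hν => h (.inr ⟨η, m, n, ν, hη, hν, rfl⟩)⟩
  · rintro ⟨hz, hy, hx⟩ g ((rfl | ⟨η, n, hη, rfl⟩) | ⟨η, m, n, ν, hη, hν, rfl⟩)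
    exacts [hz, hy η n hη, hx η m n ν hη hν]

theorem zg_mem_GU (U : Set (ℕ → S)) : zg a ∈ GU a U :=
  ((GU_le_iff a).1 le_rfl).1

variable {U W : Set (ℕ → S)}

theorem yg_mem_GU {η : ↥Λ} (hη : ∀ l, η.1 l ∈ U) (n : ℕ) : yg a η n ∈ GU a U :=
  ((GU_le_iff a).1 le_rfl).2.1 η n hη

theorem xg_mem_GU {η : Fin (k + 1) → ℕ → S} {m : Fin (k + 1)} {n : ℕ} {ν : ↥(LambdaRes Λ)}
    (hη : ∀ l, η l ∈ U) (hν : ν.1 = restrictAt η m n) : xg a ν ∈ GU a U :=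
  ((GU_le_iff a).1 le_rfl).2.2 η m n ν hη hν

theorem GU_mono : Monotone (GU a) := fun _ _ h => (GU_le_iff a).2
  ⟨zg_mem_GU a _, fun _ n hη => yg_mem_GU a (fun l => h (hη l)) n,
    fun _ _ _ _ hη hν => xg_mem_GU a (fun l => h (hη l)) hν⟩

theorem restrictAt_update {η : Fin (k + 1) → ℕ → S} {m : Fin (k + 1)} {n : ℕ} {g : ℕ → S}
    (hg : ∀ i < n, g i = η m i) : restrictAt (Function.update η m g) m n = restrictAt η m n := by
  unfold restrictAt
  congr 1
  · simp only [Function.update_self, hg _ (Fin.is_lt _)]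
  · funext l hl
    rw [Function.update_of_ne hl]

theorem xg_resMem_mem_GU {η : ↥Λ} {m : Fin (k + 1)} {n : ℕ} {g : ℕ → S}
    (hη : ∀ l ≠ m, η.1 l ∈ W) (hgW : g ∈ W) (hg : ∀ i < n, g i = η.1 m i) :
    xg a (resMem η m n) ∈ GU a W := by
  refine xg_mem_GU a (η := Function.update η.1 m g) (fun l => ?_) (restrictAt_update hg).symm
  rcases eq_or_ne l m with rfl | hl
  · rwa [Function.update_self]
  · rw [Function.update_of_ne hl]
    exact hη l hl

theorem mem_GU_iff_exists_finset {g : Gx a} :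
    g ∈ GU a W ↔ ∃ s : Finset (ℕ → S), (s : Set (ℕ → S)) ⊆ W ∧ g ∈ GU a (s : Set (ℕ → S)) := by
  classical
  refine ⟨fun hg => ?_, fun ⟨s, hs, hg⟩ => GU_mono a hs hg⟩
  let P := {s : Finset (ℕ → S) // (s : Set (ℕ → S)) ⊆ W}
  have : Nonempty P := ⟨∅, by simp⟩
  have hdirected : Directed (· ≤ ·) fun s : P => GU a (s.1 : Set (ℕ → S)) := fun s t =>
    ⟨⟨s.1 ∪ t.1, by simp [s.2, t.2]⟩, GU_mono a (by simp), GU_mono a (by simp)⟩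
  let image (η : Fin (k + 1) → ℕ → S) (hη : ∀ l, η l ∈ W) : P :=
    ⟨Finset.univ.image η, by simpa [Set.range_subset_iff] using hη⟩
  have hle : GU a W ≤ ⨆ s : P, GU a (s.1 : Set (ℕ → S)) := (GU_le_iff a).2
    ⟨AddSubgroup.mem_iSup_of_mem (Classical.arbitrary P) (zg_mem_GU a _),
      fun η n hη => AddSubgroup.mem_iSup_of_mem (image η.1 hη) (yg_mem_GU a (by simp [image]) n),
      fun η m n ν hη hν =>
        AddSubgroup.mem_iSup_of_mem (image η hη) (xg_mem_GU a (by simp [image]) hν)⟩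
  obtain ⟨s, hs⟩ := (AddSubgroup.mem_iSup_of_directed hdirected).1 (hle hg)
  exact ⟨s.1, s.2, hs⟩

theorem GU_countable (hW : W.Countable) : Countable (GU a W) := by
  have htuples : {η : Fin (k + 1) → ℕ → S | ∀ l, η l ∈ W}.Countable :=
    Set.countable_pi fun _ => hW
  refine countable_closure (((Set.countable_singleton _).union ?_).union ?_)
  · refine (((htuples.preimage Subtype.val_injective).prod Set.countable_univ).image
      fun p => yg a p.1 p.2).mono ?_
    rintro _ ⟨η, n, hη, rfl⟩
    exact ⟨(η, n), ⟨hη, trivial⟩, rfl⟩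
  · have hrestrict := ((htuples.prod (Set.countable_univ (α := Fin (k + 1) × ℕ))).image
      fun p => restrictAt p.1 p.2.1 p.2.2).preimage
        (Subtype.val_injective (p := (· ∈ LambdaRes Λ)))
    refine (hrestrict.image (xg a)).mono ?_
    rintro _ ⟨η, m, n, ν, hη, hν, rfl⟩
    exact ⟨ν, ⟨(η, m, n), ⟨hη, trivial⟩, hν.symm⟩, rfl⟩

theorem factorial_smul_yg_succ (η : ↥Λ) (n : ℕ) :
    (n.factorial : ℤ) • yg a η (n + 1) = yg a η n + a η n • zg a + ∑ m, xg a (resMem η m n) := by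
  have hrel : QuotientAddGroup.mk' (relSub a) (relEl a η n) = 0 :=
    (QuotientAddGroup.eq_zero_iff _).2 (AddSubgroup.subset_closure ⟨η, n, rfl⟩)
  simp only [relEl, sub_sub, map_sub, map_add, map_zsmul, map_sum, sub_eq_zero] at hrel
  exact hrel

open Classical in
/-- The values on the generators of the homomorphism `yFunctional`, which separates `y_{η̄,0}` from
the subgroups `G_W` for which `η̄` is not a tuple of members of `W`. -/
noncomputable def yFunctionalGen (η : ↥Λ) : Gen k S Λ → ℚ
  | .X _ => 0
  | .Y η' n => if η' = η then (∏ i ∈ Finset.range n, (i.factorial : ℚ))⁻¹ else 0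
  | .Z => 0

theorem relSub_le_ker (η : ↥Λ) :
    relSub a ≤ (FreeAbelianGroup.lift (yFunctionalGen η)).ker := by
  rw [relSub, AddSubgroup.closure_le]
  rintro _ ⟨η', n, rfl⟩
  have hn : (n.factorial : ℚ) ≠ 0 := by positivity
  by_cases h : η' = η <;>
    simp [AddMonoidHom.mem_ker, relEl, yFunctionalGen, h, Finset.prod_range_succ, hn]

/-- The homomorphism `G_x → ℚ` that kills `z`, all `x_ν`, and all `y_{η̄',n}` with `η̄' ≠ η̄`, and
is `1` at `y_{η̄,0}`; the relations then force the value `1 / ∏_{i < n} i!` at `y_{η̄,n}`. -/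
noncomputable def yFunctional (η : ↥Λ) : Gx a →+ ℚ :=
  QuotientAddGroup.lift _ (FreeAbelianGroup.lift (yFunctionalGen η)) (relSub_le_ker a η)

theorem yFunctional_yg_zero (η : ↥Λ) : yFunctional a η (yg a η 0) = 1 := by
  simp [yFunctional, yg, yFunctionalGen]

theorem GU_le_ker_yFunctional {η : ↥Λ} (hη : ∃ l, η.1 l ∉ W) :
    GU a W ≤ (yFunctional a η).ker := by
  obtain ⟨l, hl⟩ := hη
  refine (GU_le_iff a).2 ⟨?_, fun η' n hη' => ?_, fun _ _ _ ν _ _ => ?_⟩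
  · simp [AddMonoidHom.mem_ker, yFunctional, zg, yFunctionalGen]
  · have hne : η' ≠ η := fun h => hl (h ▸ hη' l)
    simp [AddMonoidHom.mem_ker, yFunctional, yg, yFunctionalGen, hne]
  · simp [AddMonoidHom.mem_ker, yFunctional, xg, yFunctionalGen]

/-- `G_W ∩ G_U` as a submodule of `G_U`. -/
def GUTrace (U W : Set (ℕ → S)) : Submodule ℤ (GU a U) :=
  ((GU a W).addSubgroupOf (GU a U)).toIntSubmodule

theorem exists_superset_isSpannedBySubbasis_GUTrace {ι : Type*} (b : Module.Basis ι ℤ (GU a U))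
    {μ : Cardinal.{u}} (hμ : ℵ₀ ≤ μ) {W₀ : Set (ℕ → S)} (hW₀ : #W₀ ≤ μ) :
    ∃ W, W₀ ⊆ W ∧ #W ≤ μ ∧ IsSpannedBySubbasis b (GUTrace a U W) := by
  refine exists_superset_isSpannedBySubbasis hμ b (fun W g => mem_GU_iff_exists_finset a)
    (fun s => ?_) (eq_top_iff.2 fun g _ => GU_mono a (Set.subset_univ U) g.2) hW₀
  have := GU_countable a s.countable_toSet
  exact Function.Injective.countable (β := GU a (s : Set (ℕ → S)))
    (f := fun g => ⟨g.1.1, g.2⟩) fun g h hgh => Subtype.ext (Subtype.ext (Subtype.mk.inj hgh))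

/-- The element `y_{η̄,n}` of `G_U`, for `η̄` with all coordinates in `U`. -/
def yGU {η : ↥Λ} (hη : ∀ l, η.1 l ∈ U) (n : ℕ) : GU a U :=
  ⟨yg a η n, yg_mem_GU a hη n⟩

variable {η : ↥Λ} {V : Fin (k + 1) → Set (ℕ → S)}

theorem factorial_smul_yGU_sub_mem (hη : ∀ l, η.1 l ∈ U) {n : ℕ}
    (hx : ∀ m, xg a (resMem η m n) ∈ GU a (V m)) :
    (n.factorial : ℤ) • yGU a hη (n + 1) - yGU a hη n ∈ ⨆ m, GUTrace a U (V m) := by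
  let z : GU a U := ⟨zg a, zg_mem_GU a U⟩
  let x (m : Fin (k + 1)) : GU a U := ⟨xg a (resMem η m n), xg_mem_GU a hη rfl⟩
  have hrel : (n.factorial : ℤ) • yGU a hη (n + 1) - yGU a hη n = a η n • z + ∑ m, x m := by
    rw [sub_eq_iff_eq_add', ← add_assoc]
    exact Subtype.ext (by simpa [yGU, z, x] using factorial_smul_yg_succ a η n)
  rw [hrel]
  refine add_mem (Submodule.smul_mem _ _ ?_) (Submodule.sum_mem _ fun m _ => ?_)
  · exact Submodule.mem_iSup_of_mem 0 (zg_mem_GU a (V 0))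
  · exact Submodule.mem_iSup_of_mem m (hx m)

theorem yGU_zero_notMem_iSup_GUTrace (hη : ∀ l, η.1 l ∈ U) (hV : ∀ m, ∃ l, η.1 l ∉ V m) :
    yGU a hη 0 ∉ ⨆ m, GUTrace a U (V m) := by
  intro hmem
  let ψ : GU a U →ₗ[ℤ] ℚ := ((yFunctional a η).comp (GU a U).subtype).toIntLinearMap
  have hle : ⨆ m, GUTrace a U (V m) ≤ ψ.ker :=
    iSup_le fun m _ hg => GU_le_ker_yFunctional a (hV m) hg
  exact one_ne_zero ((yFunctional_yg_zero a η).symm.trans (hle hmem))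

theorem not_isSpannedBySubbasis_iSup_GUTrace {ι : Type*} (b : Module.Basis ι ℤ (GU a U))
    (hη : ∀ l, η.1 l ∈ U) (hV : ∀ m, ∃ l, η.1 l ∉ V m)
    (hx : ∀ m n, xg a (resMem η m n) ∈ GU a (V m)) :
    ¬ IsSpannedBySubbasis b (⨆ m, GUTrace a U (V m)) := fun hspan =>
  yGU_zero_notMem_iSup_GUTrace a hη hV <| hspan.mem_of_factorial_smul_sub_mem fun _ =>
    factorial_smul_yGU_sub_mem a hη fun m => hx m _

end Parameter

end Sh883

open Sh883 in
theorem stmt9_general {k : ℕ} {S : Type u} (Λ : Set (Fin (k + 1) → ℕ → S))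
    (a : ↥Λ → ℕ → ℤ) (U : Set (ℕ → S)) (hUΛ : ∀ η : Fin (k + 1) → ℕ → S, (∀ l, η l ∈ U) → η ∈ Λ)
    (hU : Order.succ^[k + 1] (#S + ℵ₀) ≤ #U) :
    ¬ Module.Free ℤ (GU a U) := by
  intro hfree
  have hμ : ℵ₀ ≤ #S + ℵ₀ := self_le_add_left _ _
  obtain ⟨D, hD, hdense⟩ := exists_dense_set_mk_le S
  have hW₀ (t : Fin k → ℕ → S) : #(Set.range t ∪ D : Set (ℕ → S)) ≤ #S + ℵ₀ :=
    (mk_union_le _ _).trans <| add_le_of_le hμ ((Set.finite_range t).lt_aleph0.le.trans hμ)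
      (hD.trans (max_le hμ (self_le_add_right _ _)))
  let b := Module.Free.chooseBasis ℤ (GU a U)
  choose W hW hWcard hWspan using fun t =>
    exists_superset_isSpannedBySubbasis_GUTrace a b hμ (hW₀ t)
  obtain ⟨t, ht⟩ := exists_forall_mem_notMem_removeNth hμ W hWcard U hU
  have htU (l : Fin (k + 1)) : t l ∈ U := (ht l).1
  let η : ↥Λ := ⟨t, hUΛ t htU⟩
  have hx (m : Fin (k + 1)) (n : ℕ) : xg a (resMem η m n) ∈ GU a (W (m.removeNth t)) := by
    obtain ⟨g, hgD, hg⟩ := hdense (t m) n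
    refine xg_resMem_mem_GU a (fun l hl => ?_) (hW _ (.inr hgD)) hg
    obtain ⟨j, rfl⟩ := Fin.exists_succAbove_eq hl
    exact hW _ (.inl ⟨j, rfl⟩)
  exact not_isSpannedBySubbasis_iSup_GUTrace a b htU (fun m => ⟨m, (ht m).2⟩) hx
    (IsSpannedBySubbasis.iSup fun m => hWspan (m.removeNth t))

open Sh883 in
/-- Let `x = (S, Λ, a)` be a full abelian-group `k`-parameter (`Λ` is the
set of all `(k+1)`-tuples of functions `ℕ → S`).  If `U` is a set of functions `ℕ → S`
whose cardinality is at least the `(k+1)`-fold cardinal successor of `|S| + ℵ₀`, then the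
subgroup `G_U` of `G_x` is not a free abelian group. -/
theorem stmt9 {k : ℕ} {S : Type u} (Λ : Set (Fin (k + 1) → ℕ → S))
    (hfull : Λ = Set.univ) (a : ↥Λ → ℕ → ℤ)
    (U : Set (ℕ → S)) (hU : Order.succ^[k + 1] (#S + ℵ₀) ≤ #U) :
    ¬ Module.Free ℤ (GU a U) :=
  stmt9_general Λ a U (fun η _ => hfull ▸ Set.mem_univ η) hU
end

section
/- Let x = (S, Λ, a) be a full abelian-group k-parameter (Λ consists of all (k+1)-tuples of functions from ℕ to S) with |S| ≥ ℵ_{k+1}. Then G_x is not a free abelian group. -/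
open Cardinal

/-!
Fix a basis of `G_x`, supposing it free. Killing `z` and the `x_ν` maps `G_x` to `⨁_{η ∈ Λ} ℚ`, so
any given element lies, for all but finitely many `η`, in the span `H_η` of the basis elements with
vanishing `η`-coordinate. If `z` and all the `x_{η↾⟨m,n⟩}` lie in `H_η`, then modulo the direct
summand `H_η` the element `y_{η,0}` is divisible by every `n!`, so `y_{η,0} ∈ H_η`, although its
`η`-coordinate is `1`.

It remains to find an `η` that is not one of the finitely many tuples attached in this way to any
of its own restrictions. Its `m`-th coordinate is taken from a family of only `ℵ_{m+1}` sequences,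
the ladders of ordinals below `ω_{m+1}`, which evades `ℵ_m` guesses per initial segment.
-/

namespace Sh883

section Cardinality

variable {c : Cardinal.{u}}

lemma mk_iUnion_le_of_le_s10 {ι α : Type u} (hc : ℵ₀ ≤ c) (hι : #ι ≤ c) {f : ι → Set α}
    (hf : ∀ i, #(f i) ≤ c) : #(⋃ i, f i) ≤ c :=
  calc #(⋃ i, f i) ≤ #ι * ⨆ i, #(f i) := mk_iUnion_le f
    _ ≤ c * c := mul_le_mul' hι (ciSup_le' hf)
    _ = c := mul_eq_self hc

lemma mk_pi_le_of_le {ι : Type} [Finite ι] {α : ι → Type u} (hc : ℵ₀ ≤ c)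
    (hα : ∀ i, #(α i) ≤ c) : #(∀ i, α i) ≤ c := by
  have := Fintype.ofFinite ι
  calc #(∀ i, α i) = prod fun i => #(α i) := mk_pi α
    _ ≤ prod fun _ : ι => c := prod_le_prod _ _ hα
    _ = c ^ Fintype.card ι := by simp
    _ ≤ c := power_nat_le hc

end Cardinality

/-- No rule `g` that makes at most `c` guesses at an infinite sequence from each finite one guesses
every `η ∈ W` from at least one of its initial segments. -/
def Unpredictable {S : Type u} (c : Cardinal.{u}) (W : Set (ℕ → S)) : Prop :=
  ∀ g : List S → Set (ℕ → S), (∀ s, #(g s) ≤ c) →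
    ∃ η ∈ W, ∀ n : ℕ, η ∉ g (List.ofFn fun i : Fin n => η i)

namespace Unpredictable

variable {S T : Type u} {c : Cardinal.{u}} {W : Set (ℕ → S)}

lemma nonempty (hW : Unpredictable c W) : W.Nonempty :=
  let ⟨η, hη, _⟩ := hW (fun _ => ∅) (by simp)
  ⟨η, hη⟩

lemma image_comp (hW : Unpredictable c W) {e : S → T} (he : Function.Injective e) :
    Unpredictable c ((e ∘ ·) '' W) := by
  intro g hg
  obtain ⟨η, hη, hηg⟩ := hW (fun s => (e ∘ ·) ⁻¹' g (s.map e)) fun s =>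
    (mk_preimage_of_injective _ _ he.comp_left).trans (hg _)
  refine ⟨e ∘ η, ⟨η, hη, rfl⟩, fun n => ?_⟩
  have hn := hηg n
  rwa [Set.mem_preimage, List.map_ofFn] at hn

end Unpredictable

section Ladders

variable {K : Type u} [LinearOrder K] {c : Cardinal.{u}}

lemma exists_forall_lt_of_mk_lt_cof {A : Set K} (hA : #A < Order.cof K) :
    ∃ b, ∀ a ∈ A, a < b :=
  not_isCofinal_iff.1 fun h => (Order.cof_le h).not_gt hA

/-- `f` is a ladder for `δ`: a strictly increasing `ω`-sequence with supremum `δ`. -/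
structure IsLadder (f : ℕ → K) (δ : K) : Prop where
  strictMono : StrictMono f
  isLUB : IsLUB (Set.range f) δ

namespace IsLadder

variable {f : ℕ → K} {β δ : K}

lemma apply_lt (hf : IsLadder f δ) (n : ℕ) : f n < δ :=
  (hf.strictMono n.lt_succ_self).trans_le (hf.isLUB.1 ⟨n + 1, rfl⟩)

lemma exists_lt_apply (hf : IsLadder f δ) (hβ : β < δ) : ∃ n, β < f n := by
  simpa only [Set.exists_range_iff] using (lt_isLUB_iff hf.isLUB).1 hβ

end IsLadder

lemma exists_isLadder_of_strictMono [WellFoundedLT K] {f : ℕ → K} (hf : StrictMono f)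
    (hbdd : BddAbove (Set.range f)) : ∃ δ, IsLadder f δ :=
  ⟨wellFounded_lt.min _ hbdd, hf, wellFounded_lt.min_mem _ hbdd, fun _ => wellFounded_lt.min_le⟩

lemma exists_isLadder_forall_apply_lt [WellFoundedLT K] (hcof : ℵ₀ < Order.cof K) (h : K → K) :
    ∃ f δ, IsLadder f δ ∧ ∀ n, h (f n) < δ := by
  have exists_gt_of_countable {A : Set K} (hA : A.Countable) : ∃ b, ∀ a ∈ A, a < b :=
    exists_forall_lt_of_mk_lt_cof (hA.le_aleph0.trans_lt hcof)
  choose above habove using fun γ => exists_gt_of_countable (Set.toFinite {γ, h γ}).countable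
  obtain ⟨γ₀, -⟩ := exists_gt_of_countable Set.countable_empty
  have iterate_succ (n : ℕ) : above^[n + 1] γ₀ = above (above^[n] γ₀) :=
    Function.iterate_succ_apply' above n γ₀
  have iterate_strictMono : StrictMono fun n => above^[n] γ₀ :=
    strictMono_nat_of_lt_succ fun n => iterate_succ n ▸ habove _ _ (by simp)
  obtain ⟨b, hb⟩ := exists_gt_of_countable (Set.countable_range fun n => above^[n] γ₀)
  obtain ⟨δ, hδ⟩ :=
    exists_isLadder_of_strictMono iterate_strictMono ⟨b, fun a ha => (hb a ha).le⟩
  refine ⟨_, δ, hδ, fun n => ?_⟩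
  calc h (above^[n] γ₀) < above^[n + 1] γ₀ := iterate_succ n ▸ habove _ _ (by simp)
    _ < δ := hδ.apply_lt (n + 1)

lemma exists_forall_guess_apply_lt (hc : ℵ₀ ≤ c) (hcof : c < Order.cof K) {γ : K}
    (hγ : #(Set.Iio γ) ≤ c) {g : List K → Set (ℕ → K)} (hg : ∀ s, #(g s) ≤ c) :
    ∃ b, ∀ s : List K, (∀ x ∈ s, x < γ) → ∀ f ∈ g s, ∀ n, f n < b := by
  let values : Set K :=
    ⋃ s : List (Set.Iio γ), ⋃ f : g (s.map Subtype.val), Set.range f.1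
  have mk_values : #values ≤ c :=
    mk_iUnion_le_of_le_s10 hc ((mk_list_le_max _).trans (max_le hc hγ)) fun s =>
      mk_iUnion_le_of_le_s10 hc (hg _) fun f => (Set.countable_range f.1).le_aleph0.trans hc
  obtain ⟨b, hb⟩ := exists_forall_lt_of_mk_lt_cof (mk_values.trans_lt hcof)
  refine ⟨b, fun s hs f hf n => hb _ ?_⟩
  lift s to List (Set.Iio γ) using hs
  exact Set.mem_iUnion₂.2 ⟨s, ⟨f, hf⟩, n, rfl⟩

/-- At a `δ` closed under the bounds on the guesses, any ladder for `δ` has its initial segments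
bounded below `δ`, so the guesses made from them are bounded below `δ` while the ladder is not.
Hence one ladder for each `δ` suffices. -/
theorem exists_unpredictable_of_lt_cof [WellFoundedLT K] (hc : ℵ₀ ≤ c) (hcof : c < Order.cof K)
    (hIio : ∀ γ : K, #(Set.Iio γ) ≤ c) :
    ∃ W : Set (ℕ → K), #W ≤ #K ∧ Unpredictable c W := by
  let ladder (δ : K) : ℕ → K :=
    have : Nonempty K := ⟨δ⟩
    Classical.epsilon (IsLadder · δ)
  refine ⟨Set.range ladder, mk_range_le, fun g hg => ?_⟩
  choose bound hbound using fun γ => exists_forall_guess_apply_lt hc hcof (hIio γ) hg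
  obtain ⟨f, δ, hf, hfδ⟩ := exists_isLadder_forall_apply_lt (hc.trans_lt hcof) bound
  have hladder : IsLadder (ladder δ) δ := Classical.epsilon_spec (p := (IsLadder · δ)) ⟨f, hf⟩
  refine ⟨ladder δ, ⟨δ, rfl⟩, fun n hmem => ?_⟩
  obtain ⟨N, hN⟩ := hf.exists_lt_apply (hladder.apply_lt n)
  have initial_lt : ∀ x ∈ List.ofFn fun i : Fin n => ladder δ i, x < f N := by
    rw [List.forall_mem_ofFn_iff]
    exact fun i => (hladder.strictMono i.2).trans hN
  obtain ⟨n', hn'⟩ := hladder.exists_lt_apply (hfδ N)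
  exact hn'.not_gt (hbound (f N) _ initial_lt _ hmem n')

theorem exists_unpredictable {S : Type u} (hc : ℵ₀ ≤ c) (hS : Order.succ c ≤ #S) :
    ∃ W : Set (ℕ → S), #W ≤ Order.succ c ∧ Unpredictable c W := by
  let K := (Order.succ c).ord.ToType
  have mk_K : #K = Order.succ c := mk_ord_toType _
  have cof_K : c < Order.cof K := by
    rw [Ordinal.cof_toType, (isRegular_succ hc).cof_ord]
    exact Order.lt_succ c
  have mk_Iio_le (γ : K) : #(Set.Iio γ) ≤ c :=
    Order.lt_succ_iff.1 ((mk_Iio_lt γ (by simp [K])).trans_eq mk_K)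
  obtain ⟨e⟩ : Nonempty (K ↪ S) := (le_def K S).1 (mk_K.trans_le hS)
  obtain ⟨W, hWK, hW⟩ := exists_unpredictable_of_lt_cof hc cof_K mk_Iio_le
  exact ⟨_, mk_image_le.trans (hWK.trans_eq mk_K), hW.image_comp e.injective⟩

end Ladders

section Evasion

open Function

/-- The coordinates are chosen from the last one down: `W (Fin.last n)` evades simultaneously the
guesses arising from all of the at most `κ (Fin.last n)` choices of the lower coordinates. -/
theorem exists_mem_forall_not_of_unpredictable {n : ℕ} {S : Type u} {κ : Fin n → Cardinal.{u}}
    {W : Fin n → Set (ℕ → S)} (hκ : ∀ m, ℵ₀ ≤ κ m) (hW : ∀ m, Unpredictable (κ m) (W m))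
    (hWκ : ∀ l m, l < m → #(W l) ≤ κ m) {P : Fin n → List S → (Fin n → ℕ → S) → Prop}
    (hP : ∀ m s η, #{τ | P m s (update η m τ)} ≤ κ m) :
    ∃ η : Fin n → ℕ → S, (∀ m, η m ∈ W m) ∧
      ∀ m (j : ℕ), ¬ P m (List.ofFn fun i : Fin j => η m i) η := by
  induction n with
  | zero => exact ⟨Fin.elim0, fun m => m.elim0, fun m => m.elim0⟩
  | succ n ih =>
    obtain ⟨τ₀, -⟩ := (hW (Fin.last n)).nonempty
    have mk_lower_le : #(∀ l : Fin n, W l.castSucc) ≤ κ (Fin.last n) :=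
      mk_pi_le_of_le (hκ _) fun l => hWκ _ _ l.castSucc_lt_last
    have mk_bad_le (s : List S) (ρ : Fin n → ℕ → S) :
        #{τ | P (Fin.last n) s (Fin.snoc ρ τ)} ≤ κ (Fin.last n) := by
      simpa only [Fin.update_snoc_last] using hP (Fin.last n) s (Fin.snoc ρ τ₀)
    obtain ⟨τ, hτW, hτ⟩ := hW (Fin.last n)
      (fun s => ⋃ ρ : ∀ l : Fin n, W l.castSucc,
        {τ | P (Fin.last n) s (Fin.snoc (fun l => (ρ l).1) τ)})
      fun s => mk_iUnion_le_of_le_s10 (hκ _) mk_lower_le fun ρ => mk_bad_le s _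
    obtain ⟨ρ, hρW, hρ⟩ := ih (fun m => hκ m.castSucc) (fun m => hW m.castSucc)
      (fun l m hlm => hWκ _ _ (Fin.castSucc_lt_castSucc_iff.2 hlm))
      (P := fun m s ρ => P m.castSucc s (Fin.snoc ρ τ))
      fun m s ρ => by simpa only [Fin.snoc_update] using hP m.castSucc s (Fin.snoc ρ τ)
    refine ⟨Fin.snoc ρ τ, Fin.forall_fin_succ'.2 ⟨?_, ?_⟩, Fin.forall_fin_succ'.2 ⟨?_, ?_⟩⟩
    · simpa only [Fin.snoc_castSucc] using hρW
    · simpa only [Fin.snoc_last] using hτW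
    · simpa only [Fin.snoc_castSucc] using hρ
    · intro j hbad
      rw [Fin.snoc_last] at hbad
      exact hτ j (Set.mem_iUnion.2 ⟨fun l => ⟨ρ l, hρW l⟩, hbad⟩)

theorem exists_forall_notMem_restrictAt {k : ℕ} {S : Type u} (hS : ℵ_ (k + 1) ≤ #S)
    {F : Res k S → Set (Fin (k + 1) → ℕ → S)} (hF : ∀ ν, (F ν).Countable) :
    ∃ η : Fin (k + 1) → ℕ → S, ∀ m n, η ∉ F (restrictAt η m n) := by
  have succ_aleph_le (m : ℕ) {o : ℕ} (hm : m < o) : Order.succ (ℵ_ m) ≤ ℵ_ (o : Ordinal.{u}) := by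
    rw [succ_aleph, aleph_le_aleph]
    exact_mod_cast hm
  choose W mk_W hW using fun m : Fin (k + 1) =>
    exists_unpredictable (aleph0_le_aleph m)
      ((succ_aleph_le m m.2).trans (by exact_mod_cast hS))
  let P (m : Fin (k + 1)) (s : List S) (η : Fin (k + 1) → ℕ → S) : Prop :=
    η ∈ F ⟨m, s, fun l _ => η l⟩
  have mk_P_le (m s η) : #{τ | P m s (update η m τ)} ≤ ℵ_ (m : ℕ) := by
    have rest_update (τ) : (fun l (_ : l ≠ m) => update η m τ l) = fun l _ => η l :=
      funext₂ fun l hl => update_of_ne hl τ η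
    have countable_bad : {τ | update η m τ ∈ F ⟨m, s, fun l _ => η l⟩}.Countable :=
      (hF _).preimage (update_injective η m)
    simpa only [P, rest_update] using countable_bad.le_aleph0.trans (aleph0_le_aleph _)
  obtain ⟨η, -, hη⟩ := exists_mem_forall_not_of_unpredictable (fun m => aleph0_le_aleph _) hW
    (fun l m hlm => (mk_W l).trans (succ_aleph_le l hlm)) mk_P_le
  exact ⟨η, hη⟩

/-- Whenever finitely many members of `Λ` are attached to each `ν ∈ Λ_0 ∪ … ∪ Λ_k`, some `η ∈ Λ` is
attached to none of its own restrictions `η↾⟨m,n⟩`. -/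
def Evasive {k : ℕ} {S : Type u} (Λ : Set (Fin (k + 1) → ℕ → S)) : Prop :=
  ∀ F : LambdaRes Λ → Set Λ, (∀ ν, (F ν).Finite) → ∃ η : Λ, ∀ m n, η ∉ F (resMem η m n)

theorem evasive_univ {k : ℕ} {S : Type u} (hS : ℵ_ (k + 1) ≤ #S) :
    Evasive (Set.univ : Set (Fin (k + 1) → ℕ → S)) := by
  intro F hF
  let e := (Equiv.Set.univ (Fin (k + 1) → ℕ → S)).symm
  obtain ⟨η, hη⟩ := exists_forall_notMem_restrictAt hS
    (F := fun ν => ⋃ hν : ν ∈ LambdaRes Set.univ, e ⁻¹' F ⟨ν, hν⟩)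
    fun ν => Set.countable_iUnion fun hν => (hF ⟨ν, hν⟩).countable.preimage e.injective
  exact ⟨e η, fun m n hmem => hη m n (Set.mem_iUnion.2 ⟨(resMem (e η) m n).2, hmem⟩)⟩

end Evasion

section Basis

open Submodule Module

lemma finite_setOf_notMem_span_basis {ι α R M N : Type*} [Semiring R] [AddCommMonoid M]
    [Module R M] [Zero N] (b : Basis ι R M) (v : ι → α →₀ N) (g : M) :
    {η | g ∉ span R (b '' {i | v i η = 0})}.Finite := by
  refine ((b.repr g).support.finite_toSet.biUnion fun i _ => (v i).hasFiniteSupport).subset ?_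
  intro η hη
  obtain ⟨i, hi, hvi⟩ := Set.not_subset.1 (mt b.mem_span_image.2 hη)
  exact Set.mem_biUnion hi hvi

lemma eq_zero_of_factorial_mul_succ {r : ℕ → ℤ} (hr : ∀ n, (n.factorial : ℤ) * r (n + 1) = r n) :
    r 0 = 0 := by
  have eq_prod_mul (n : ℕ) : r 0 = (∏ i ∈ Finset.range n, (i.factorial : ℤ)) * r n := by
    induction n with
    | zero => simp
    | succ n ih => rw [ih, Finset.prod_range_succ, mul_assoc, hr]
  have dvd (n : ℕ) (hn : 0 < n) : (n : ℤ) ∣ r 0 := by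
    have hfact : (n : ℤ) ∣ (n.factorial : ℤ) := mod_cast Nat.dvd_factorial hn le_rfl
    rw [eq_prod_mul (n + 1), Finset.prod_range_succ]
    exact (hfact.mul_left _).mul_right _
  exact Int.eq_zero_of_abs_lt_dvd (dvd ((r 0).natAbs + 1) (Nat.succ_pos _)) (by simp)

lemma mem_span_basis_of_factorial_smul_succ {ι G : Type*} [AddCommGroup G] (b : Basis ι ℤ G)
    (s : Set ι) {x y : ℕ → G} (hy : ∀ n, (n.factorial : ℤ) • y (n + 1) = y n + x n)
    (hx : ∀ n, x n ∈ span ℤ (b '' s)) : y 0 ∈ span ℤ (b '' s) := by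
  refine b.mem_span_image.2 fun i hi => by_contra fun his => Finsupp.mem_support_iff.1 hi ?_
  have repr_x (n : ℕ) : b.repr (x n) i = 0 :=
    Finsupp.notMem_support_iff.1 fun h => his (b.mem_span_image.1 (hx n) h)
  refine eq_zero_of_factorial_mul_succ (r := fun n => b.repr (y n) i) fun n => ?_
  simpa [repr_x n] using congrArg (b.repr · i) (hy n)

end Basis

section Group

variable {k : ℕ} {S : Type u} {Λ : Set (Fin (k + 1) → ℕ → S)} (a : Λ → ℕ → ℤ)

/-- The image in `G_x` of a generator. -/
def genGx (t : Gen k S Λ) : Gx a :=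
  QuotientAddGroup.mk' (relSub a) (FreeAbelianGroup.of t)

lemma factorial_smul_genGx_Y_succ (η : Λ) (n : ℕ) :
    (n.factorial : ℤ) • genGx a (.Y η (n + 1)) =
      genGx a (.Y η n) + (a η n • genGx a .Z + ∑ m, genGx a (.X (resMem η m n))) := by
  have rel_eq_zero : QuotientAddGroup.mk' (relSub a) (relEl a η n) = 0 :=
    (QuotientAddGroup.eq_zero_iff _).2 (AddSubgroup.subset_closure ⟨η, n, rfl⟩)
  rwa [relEl, map_sub, map_sub, map_sub, map_zsmul, map_zsmul, map_sum, sub_sub, sub_sub,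
    sub_eq_zero] at rel_eq_zero

/-- The values of `yCoord` on generators. Killing `z` and all `x_ν` turns the relations into
`y_{η,n} = n!·y_{η,n+1}`, which forces `y_{η,n} = y_{η,0} / ∏_{i<n} i!`. -/
noncomputable def yCoordGen : Gen k S Λ → Λ →₀ ℚ
  | .X _ => 0
  | .Y η n => Finsupp.single η (∏ i ∈ Finset.range n, (i.factorial : ℚ))⁻¹
  | .Z => 0

lemma lift_yCoordGen_relEl (η : Λ) (n : ℕ) :
    FreeAbelianGroup.lift yCoordGen (relEl a η n) = 0 := by
  have coeff_eq : (n.factorial : ℚ) * (∏ i ∈ Finset.range (n + 1), (i.factorial : ℚ))⁻¹ =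
      (∏ i ∈ Finset.range n, (i.factorial : ℚ))⁻¹ := by
    have hn : (n.factorial : ℚ) ≠ 0 := mod_cast n.factorial_ne_zero
    rw [Finset.prod_range_succ, mul_inv_rev, mul_inv_cancel_left₀ hn]
  simp [relEl, yCoordGen, coeff_eq]

/-- The homomorphism reading off from an element of `G_x`, modulo `z` and the `x_ν`, its rational
coordinate with respect to each `y_{η,0}`. -/
noncomputable def yCoord : Gx a →+ Λ →₀ ℚ :=
  QuotientAddGroup.lift (relSub a) (FreeAbelianGroup.lift yCoordGen) <|
    (AddSubgroup.closure_le _).2 fun _ ⟨η, n, hg⟩ => hg ▸ lift_yCoordGen_relEl a η n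

lemma yCoord_genGx (t : Gen k S Λ) : yCoord a (genGx a t) = yCoordGen t :=
  FreeAbelianGroup.lift_apply_of ..

lemma yCoord_genGx_Y_zero (η : Λ) : yCoord a (genGx a (.Y η 0)) η = 1 := by
  simp [yCoord_genGx, yCoordGen]

lemma yCoord_eq_zero_of_mem_span {s : Set (Gx a)} {η : Λ} (hs : ∀ g ∈ s, yCoord a g η = 0)
    {g : Gx a} (hg : g ∈ Submodule.span ℤ s) : yCoord a g η = 0 := by
  let coordAt : Gx a →+ ℚ := (Finsupp.applyAddHom η).comp (yCoord a)
  exact Submodule.span_le (p := LinearMap.ker coordAt.toIntLinearMap).2 hs hg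

theorem not_free_Gx_of_evasive (hΛ : Evasive Λ) : ¬ Module.Free ℤ (Gx a) := by
  intro _
  let b := Module.Free.chooseBasis ℤ (Gx a)
  let H (η : Λ) : Submodule ℤ (Gx a) := Submodule.span ℤ (b '' {i | yCoord a (b i) η = 0})
  have finite_notMem (g : Gx a) : {η | g ∉ H η}.Finite :=
    finite_setOf_notMem_span_basis b (fun i => yCoord a (b i)) g
  obtain ⟨η, hη⟩ := hΛ (fun ν => {η | genGx a .Z ∉ H η} ∪ {η | genGx a (.X ν) ∉ H η})
    fun ν => (finite_notMem _).union (finite_notMem _)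
  have z_mem : genGx a .Z ∈ H η := not_not.1 fun h => hη 0 0 (.inl h)
  have x_mem (m n) : genGx a (.X (resMem η m n)) ∈ H η := not_not.1 fun h => hη m n (.inr h)
  have y_mem : genGx a (.Y η 0) ∈ H η :=
    mem_span_basis_of_factorial_smul_succ b _ (y := fun n => genGx a (.Y η n))
      (factorial_smul_genGx_Y_succ a η)
      fun n => add_mem (zsmul_mem z_mem _) (sum_mem fun m _ => x_mem m n)
  have y_coord : yCoord a (genGx a (.Y η 0)) η = 0 :=
    yCoord_eq_zero_of_mem_span a (by rintro _ ⟨i, hi, rfl⟩; exact hi) y_mem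
  exact one_ne_zero ((yCoord_genGx_Y_zero a η).symm.trans y_coord)

end Group

end Sh883

open Sh883 in
/-- Let `x = (S, Λ, a)` be a full abelian-group `k`-parameter (`Λ` is
the set of all `(k+1)`-tuples of functions `ℕ → S`) with `|S| ≥ ℵ_{k+1}`.  Then `G_x` is
not a free abelian group. -/
theorem stmt10 {k : ℕ} {S : Type u} (Λ : Set (Fin (k + 1) → ℕ → S))
    (hfull : Λ = Set.univ) (a : ↥Λ → ℕ → ℤ)
    (hS : Cardinal.aleph (k + 1) ≤ #S) :
    ¬ Module.Free ℤ (Gx a) := by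
  subst hfull
  exact not_free_Gx_of_evasive a (evasive_univ hS)
end

section
/- Let x = (S, Λ) be a combinatorial k-parameter with S a set of ordinals, and let F be a regressive function on x which is finitary or simple. Then (x, F) is ℵ_{k+1}-free: every subset Λ' ⊆ Λ of cardinality less than ℵ_{k+1} is free for (x, F). -/
open Cardinal

namespace Sh883

/-- Elements of `Λ ∪ Λ_0 ∪ … ∪ Λ_k`: either a full tuple or a restricted tuple.
Here `S` is a set of ordinals. -/
abbrev FullOrRes (k : ℕ) (Sset : Set Ordinal.{u}) : Type (u + 1) :=
  (Fin (k + 1) → ℕ → ↥Sset) ⊕ Res k ↥Sset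

/-- The set of ordinal values of the `l`-th coordinate of a (full or restricted) tuple. -/
def coordVals {k : ℕ} {Sset : Set Ordinal.{u}} (w : FullOrRes k Sset) (l : Fin (k + 1)) :
    Set Ordinal.{u} :=
  match w with
  | Sum.inl ν => Set.range fun i : ℕ => (ν l i : Ordinal)
  | Sum.inr ρ =>
      if h : l = ρ.m then {o : Ordinal | ∃ s ∈ ρ.seq, (s : Ordinal) = o}
      else Set.range fun i : ℕ => (ρ.rest l h i : Ordinal)

/-- `F` is a regressive function on the combinatorial `k`-parameter `(Sset, Λ)` (with
`Sset` a set of ordinals): `F` assigns to each `η̄ ∈ Λ` a countable subset of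
`Λ ∪ Λ_0 ∪ … ∪ Λ_k` such that for all `ℓ ≤ k`,
`sup(range η_ℓ) > sup(⋃ {ℓ-th coordinate values of members of F(η̄)})`. -/
def Regressive {k : ℕ} {Sset : Set Ordinal.{u}} (Λ : Set (Fin (k + 1) → ℕ → ↥Sset))
    (F : ↥Λ → Set (FullOrRes k Sset)) : Prop :=
  (∀ η : ↥Λ, (F η).Countable) ∧
    (∀ η : ↥Λ, ∀ w ∈ F η, Sum.elim (· ∈ Λ) (· ∈ LambdaRes Λ) w) ∧
    ∀ (η : ↥Λ) (l : Fin (k + 1)),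
      sSup (⋃ w ∈ F η, coordVals w l) <
        ⨆ i : ℕ, (((η : Fin (k + 1) → ℕ → ↥Sset) l i : Ordinal))

/-- `F` is finitary: each `F(η̄)` is finite. -/
def Finitary {k : ℕ} {Sset : Set Ordinal.{u}} {Λ : Set (Fin (k + 1) → ℕ → ↥Sset)}
    (F : ↥Λ → Set (FullOrRes k Sset)) : Prop :=
  ∀ η : ↥Λ, (F η).Finite

/-- `F` is simple: `F(η̄)` depends only on `η_k(0)`. -/
def Simple {k : ℕ} {Sset : Set Ordinal.{u}} {Λ : Set (Fin (k + 1) → ℕ → ↥Sset)}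
    (F : ↥Λ → Set (FullOrRes k Sset)) : Prop :=
  ∀ η η' : ↥Λ,
    (η : Fin (k + 1) → ℕ → ↥Sset) (Fin.last k) 0 =
      (η' : Fin (k + 1) → ℕ → ↥Sset) (Fin.last k) 0 → F η = F η'

/-- `Λ'` is free for `(x, F)`: there are an enumeration `⟨η̄^α : α < α*⟩` of
`Λ' ∪ ⋃{F(η̄) : η̄ ∈ Λ'}` and indices `⟨ℓ_α : α < α*⟩` such that (i) if `η̄^α ∈ Λ'` then
`F(η̄^α) ⊆ {η̄^β : β < α} ∪ {η̄^β↾⟨m,n⟩ : β < α, m ≤ k, n ∈ ℕ}`, and (ii) if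
`η̄^α ∈ Λ'` then for some `n`,
`η̄^α↾⟨ℓ_α,n⟩ ∉ {η̄^β↾⟨ℓ_α,n⟩ : β < α, η̄^β ∈ Λ'} ∪ {η̄^β : β < α}`. -/
def FreeFor {k : ℕ} {Sset : Set Ordinal.{u}} (Λ : Set (Fin (k + 1) → ℕ → ↥Sset))
    (F : ↥Λ → Set (FullOrRes k Sset)) (Λ' : Set (Fin (k + 1) → ℕ → ↥Sset)) : Prop :=
  ∃ (o : Ordinal.{u + 1}) (e : Set.Iio o → FullOrRes k Sset) (L : Set.Iio o → Fin (k + 1)),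
    Function.Injective e ∧
    (Set.range e =
      Sum.inl '' Λ' ∪ ⋃ (η : ↥Λ) (_ : (η : Fin (k + 1) → ℕ → ↥Sset) ∈ Λ'), F η) ∧
    (∀ (α : Set.Iio o) (η : ↥Λ),
      e α = Sum.inl (η : Fin (k + 1) → ℕ → ↥Sset) → (η : Fin (k + 1) → ℕ → ↥Sset) ∈ Λ' →
      F η ⊆ {w | ∃ β : Set.Iio o, (β : Ordinal) < (α : Ordinal) ∧
        (w = e β ∨ ∃ (ν : Fin (k + 1) → ℕ → ↥Sset) (m : Fin (k + 1)) (n : ℕ),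
          e β = Sum.inl ν ∧ w = Sum.inr (restrictAt ν m n))}) ∧
    ∀ (α : Set.Iio o) (η : ↥Λ),
      e α = Sum.inl (η : Fin (k + 1) → ℕ → ↥Sset) → (η : Fin (k + 1) → ℕ → ↥Sset) ∈ Λ' →
      ∃ n : ℕ, ∀ β : Set.Iio o, (β : Ordinal) < (α : Ordinal) →
        e β ≠ Sum.inr (restrictAt (η : Fin (k + 1) → ℕ → ↥Sset) (L α) n) ∧
        ∀ ν : Fin (k + 1) → ℕ → ↥Sset, e β = Sum.inl ν → ν ∈ Λ' →
          restrictAt (η : Fin (k + 1) → ℕ → ↥Sset) (L α) n ≠ restrictAt ν (L α) n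

end Sh883

/-!
Order `Λ'` so that at each `η̄` some coordinate `l` and some `n` make `η̄↾⟨l,n⟩` new, allowing only
coordinates from a prescribed nonempty set `u η̄`.

For countable `Λ'` any coordinate will do. If `F` is finitary, list `Λ'` in type `ω` compatibly
with the well-founded relation `ν̄ ∈ F η̄`: only finitely many objects precede `η̄`. If `F` is
simple, the classes of `η̄ ↦ η_k(0)` become intervals of ordinals, from the bound on `F` to the
least `sup (range η_k)`. A countable set of intervals has a well-order in which an interval lying
below another one precedes it, and which keeps the left ends preceding an interval bounded away from
its right end; along it, the bounds of the `F ν̄` met before `η̄` are exceeded by some `η_k(i)`.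

To pass from `ℵ_f` to `ℵ_{f+1}`, filter the sequences occurring in `Λ'` by an increasing chain of
sets of size at most `ℵ_f` closed under `F`, and treat the tuples entering at each stage in turn.
An earlier tuple can clash with `η̄↾⟨l,n⟩` only if all coordinates of `η̄` except the `l`-th were
already present, which happens for at most one `l`. Hence each step costs one coordinate, and the
`k + 1` coordinates suffice up to `ℵ_k`.
-/

namespace Sh883

open Set Filter

universe v w

section LexOn

variable {T : Type v} {ι : Type w}

/-- The lexicographic relation which first compares the values of `g` by `r` and then compares
two points of the fibre of `g` over `i` by `s i`. -/
def LexOn (r : ι → ι → Prop) (g : T → ι) (s : ι → T → T → Prop) (x y : T) : Prop :=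
  r (g x) (g y) ∨ g x = g y ∧ s (g y) x y

theorem isWellOrder_lexOn (r : ι → ι → Prop) [IsWellOrder ι r] (g : T → ι) (s : ι → T → T → Prop)
    (hs : ∀ i, IsWellOrder T (s i)) : IsWellOrder T (LexOn r g s) where
  wf := by
    have acc_of_fibre (i : ι) : ∀ x, g x = i → Acc (LexOn r g s) x := by
      induction i using (IsWellFounded.wf (r := r)).induction with
      | _ i ih_index =>
      intro x
      induction x using (hs i).wf.induction with
      | _ x ih_fibre =>
      intro hx
      constructor
      rintro y (hy | ⟨hy, hyx⟩)
      · exact ih_index (g y) (hx ▸ hy) y rfl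
      · exact ih_fibre y (hx ▸ hyx) (hy.trans hx)
    exact ⟨fun x => acc_of_fibre (g x) x rfl⟩
  trichotomous x y hxy hyx := by
    rcases trichotomous_of r (g x) (g y) with hlt | heq | hgt
    · exact absurd (Or.inl hlt) hxy
    · exact (hs (g y)).trichotomous x y (fun h => hxy (Or.inr ⟨heq, h⟩))
        fun h => hyx (Or.inr ⟨heq.symm, heq ▸ h⟩)
    · exact absurd (Or.inl hgt) hyx

theorem le_of_lexOn_lt [Preorder ι] {g : T → ι} {s : ι → T → T → Prop} {x y : T}
    (h : LexOn (· < ·) g s x y) : g x ≤ g y :=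
  h.elim le_of_lt fun h => h.1.le

end LexOn

theorem exists_nat_rank_ge {α : Type v} {r : α → α → Prop} (hwf : WellFounded r)
    (hfin : ∀ b, {a | r a b}.Finite) (f : α → ℕ) :
    ∃ h : α → ℕ, (∀ a, f a ≤ h a) ∧ ∀ a b, r a b → h a < h b := by
  let h : α → ℕ := hwf.fix fun b ih => max (f b) (⨆ a : {a // r a b}, ih a.1 a.2 + 1)
  have h_eq (b : α) : h b = max (f b) (⨆ a : {a // r a b}, h a.1 + 1) := hwf.fix_eq _ b
  refine ⟨h, fun a => (h_eq a).symm ▸ le_max_left _ _, fun a b hab => ?_⟩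
  have : Finite {a // r a b} := hfin b
  calc h a < h a + 1 := Nat.lt_succ_self _
    _ ≤ ⨆ a : {a // r a b}, h a.1 + 1 :=
      le_ciSup (f := fun a : {a // r a b} => h a.1 + 1) (finite_range _).bddAbove ⟨a, hab⟩
    _ ≤ h b := (h_eq b).symm ▸ le_max_right _ _

theorem finite_sep_le_of_injOn {α : Type v} {Ω : Set α} {f h : α → ℕ} (hf : InjOn f Ω)
    (hfh : ∀ a, f a ≤ h a) (n : ℕ) : {a ∈ Ω | h a ≤ n}.Finite := by
  refine Finite.of_finite_image ((finite_Iic n).subset ?_) (hf.mono fun a ha => ha.1)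
  rintro _ ⟨a, ha, rfl⟩
  exact (hfh a).trans ha.2

/-! ### Interval orders -/

section IntervalOrder

variable {K : Type v} {O : Type w} [LinearOrder O] {s t : K → O} {A B : Set K} {r : K → K → Prop}

/-- A well-order of `K` adapted on `A` to intervals `(t a, s a)`: an interval lying below another
one precedes it, and the left ends of the predecessors of `b` stay bounded away from `s b`. -/
structure IsIntervalOrder (s t : K → O) (A : Set K) (r : K → K → Prop) : Prop where
  isWellOrder : IsWellOrder K r
  rel_of_le : ∀ a ∈ A, ∀ b ∈ A, s a ≤ t b → r a b
  exists_bound : ∀ b ∈ A, ∃ τ < s b, ∀ a ∈ A, r a b → t a ≤ τ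

theorem IsIntervalOrder.mono (h : IsIntervalOrder s t B r) (hAB : A ⊆ B) :
    IsIntervalOrder s t A r where
  isWellOrder := h.isWellOrder
  rel_of_le a ha b hb := h.rel_of_le a (hAB ha) b (hAB hb)
  exists_bound b hb := by
    obtain ⟨τ, hτ, hle⟩ := h.exists_bound b (hAB hb)
    exact ⟨τ, hτ, fun a ha => hle a (hAB ha)⟩

/-- The first `n` such that `c` is `e n` or its interval lies below that of `e n`; it is the
number of the block of `c` in the interval order built from the enumeration `e`. -/
noncomputable def blockIndex (s t : K → O) (e : ℕ → K) (c : K) : ℕ :=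
  sInf {n | c = e n ∨ s c ≤ t (e n)}

variable {e : ℕ → K}

theorem blockIndex_spec {c : K} (hc : c ∈ range e) :
    c = e (blockIndex s t e c) ∨ s c ≤ t (e (blockIndex s t e c)) := by
  obtain ⟨n, rfl⟩ := hc
  exact Nat.sInf_mem (s := {m | e n = e m ∨ s (e n) ≤ t (e m)}) ⟨n, Or.inl rfl⟩

theorem blockIndex_le {c : K} {n : ℕ} (h : s c ≤ t (e n)) : blockIndex s t e c ≤ n :=
  Nat.sInf_le (Or.inr h)

theorem left_le_left_blockIndex (hts : ∀ n, t (e n) < s (e n)) {c : K} (hc : c ∈ range e) :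
    t c ≤ t (e (blockIndex s t e c)) := by
  rcases blockIndex_spec (s := s) (t := t) hc with h | h
  · exact (congrArg t h).le
  · obtain ⟨n, rfl⟩ := hc
    exact (hts n).le.trans h

/-- Blocks are listed in the order of the enumeration; within the block of `e n` the point `e n`
comes last, after the intervals below it, which are ordered by `R n`. -/
def blockOrder (s t : K → O) (e : ℕ → K) (R : ℕ → K → K → Prop) : K → K → Prop :=
  LexOn (· < ·) (blockIndex s t e) fun n => LexOn (· < ·) (· = e n) fun _ => R n

variable {R : ℕ → K → K → Prop}

theorem blockOrder_of_le (hts : ∀ n, t (e n) < s (e n))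
    (hR : ∀ n, IsIntervalOrder s t {c ∈ range e | s c ≤ t (e n)} (R n)) {a b : K}
    (ha : a ∈ range e) (hb : b ∈ range e) (hab : s a ≤ t b) : blockOrder s t e R a b := by
  set n := blockIndex s t e b with hn
  have hbn : b = e n ∨ s b ≤ t (e n) := blockIndex_spec hb
  have han : s a ≤ t (e n) := hab.trans (left_le_left_blockIndex hts hb)
  have a_ne : a ≠ e n := fun h => (hts n).not_ge (h ▸ han)
  rcases (blockIndex_le han).lt_or_eq with hlt | heq
  · exact Or.inl hlt
  refine Or.inr ⟨heq, ?_⟩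
  rw [← hn]
  by_cases b_eq : b = e n
  · exact Or.inl (lt_iff_le_not_ge.2 ⟨fun h => absurd h a_ne, fun h => a_ne (h b_eq)⟩)
  · exact Or.inr ⟨by simp [a_ne, b_eq],
      (hR n).rel_of_le a ⟨ha, han⟩ b ⟨hb, hbn.resolve_left b_eq⟩ hab⟩

theorem exists_bound_same_block (hts : ∀ n, t (e n) < s (e n))
    (hR : ∀ n, IsIntervalOrder s t {c ∈ range e | s c ≤ t (e n)} (R n)) {b : K}
    (hb : b ∈ range e) :
    ∃ τ < s b, ∀ a ∈ range e, blockIndex s t e a = blockIndex s t e b →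
      blockOrder s t e R a b → t a ≤ τ := by
  set n := blockIndex s t e b with hn
  by_cases b_eq : b = e n
  · refine ⟨t (e n), b_eq ▸ hts n, fun a ha han _ => ?_⟩
    exact han ▸ left_le_left_blockIndex hts ha
  have hbn : s b ≤ t (e n) := (blockIndex_spec hb).resolve_left b_eq
  obtain ⟨τ, hτ, hle⟩ := (hR n).exists_bound b ⟨hb, hbn⟩
  refine ⟨τ, hτ, fun a ha han hab => ?_⟩
  have hab_block := (hab.resolve_left (han.trans hn).not_lt).2
  rw [← hn] at hab_block
  have a_ne : a ≠ e n := fun h => b_eq ((le_of_lexOn_lt hab_block : a = e n → b = e n) h)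
  have hRab : R n a b := (hab_block.resolve_left (by simp [b_eq])).2
  have hsa := (blockIndex_spec (s := s) (t := t) ha).resolve_left (by rwa [han])
  exact hle a ⟨ha, han ▸ hsa⟩ hRab

theorem isIntervalOrder_blockOrder [OrderBot O] (hts : ∀ n, t (e n) < s (e n))
    (hR : ∀ n, IsIntervalOrder s t {c ∈ range e | s c ≤ t (e n)} (R n)) :
    IsIntervalOrder s t (range e) (blockOrder s t e R) where
  isWellOrder := isWellOrder_lexOn _ _ _ fun _ => isWellOrder_lexOn _ _ _ fun _ =>
    (hR _).isWellOrder
  rel_of_le _ ha _ hb hab := blockOrder_of_le hts hR ha hb hab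
  exists_bound b hb := by
    obtain ⟨τ, hτ, hle⟩ := exists_bound_same_block hts hR hb
    set n := blockIndex s t e b
    have left_lt (m : ℕ) (hm : m < n) : t (e m) < s b :=
      lt_of_not_ge fun h => hm.not_ge (blockIndex_le h)
    refine ⟨max τ ((Finset.range n).sup fun m => t (e m)), max_lt hτ ?_, fun a ha hab => ?_⟩
    · rw [Finset.sup_lt_iff (bot_le.trans_lt hτ)]
      exact fun m hm => left_lt m (Finset.mem_range.1 hm)
    rcases (le_of_lexOn_lt hab).lt_or_eq with hlt | heq
    · calc t a ≤ t (e (blockIndex s t e a)) := left_le_left_blockIndex hts ha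
        _ ≤ (Finset.range n).sup fun m => t (e m) :=
          Finset.le_sup (f := fun m => t (e m)) (Finset.mem_range.2 hlt)
        _ ≤ _ := le_max_right _ _
    · exact (hle a ha heq hab).trans (le_max_left _ _)

theorem exists_isIntervalOrder_of_forall_below [OrderBot O] (hA : A.Countable)
    (hts : ∀ a ∈ A, t a < s a)
    (hbelow : ∀ d ∈ A, ∃ r, IsIntervalOrder s t {c ∈ A | s c ≤ t d} r) :
    ∃ r, IsIntervalOrder s t A r := by
  rcases A.eq_empty_or_nonempty with rfl | hne
  · exact ⟨WellOrderingRel, inferInstance, by simp, by simp⟩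
  obtain ⟨e, rfl⟩ := hA.exists_eq_range hne
  choose R hR using fun n => hbelow (e n) (mem_range_self n)
  exact ⟨_, isIntervalOrder_blockOrder (fun n => hts (e n) (mem_range_self n)) hR⟩

theorem exists_isIntervalOrder [OrderBot O] [WellFoundedLT O] (hA : A.Countable)
    (hts : ∀ a ∈ A, t a < s a) : ∃ r, IsIntervalOrder s t A r := by
  have exists_below (σ : O) : ∃ r, IsIntervalOrder s t {c ∈ A | s c ≤ σ} r := by
    induction σ using WellFoundedLT.induction with
    | ind σ ih =>
    refine exists_isIntervalOrder_of_forall_below (hA.mono (sep_subset _ _))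
      (fun a ha => hts a ha.1) fun d hd => ?_
    obtain ⟨r, hr⟩ := ih (t d) ((hts d hd.1).trans_le hd.2)
    exact ⟨r, hr.mono fun c hc => ⟨hc.1.1, hc.2⟩⟩
  exact exists_isIntervalOrder_of_forall_below hA hts fun d _ => exists_below (t d)

end IntervalOrder

/-! ### Freeing orders -/

/-- The `(k+1)`-tuples of sequences in `S`. -/
abbrev Tuple (k : ℕ) (S : Type v) : Type v := Fin (k + 1) → ℕ → S

/-- Full or restricted tuples: the generic version of `FullOrRes`, for an arbitrary type `S`. -/
abbrev Piece (k : ℕ) (S : Type v) : Type v := Tuple k S ⊕ Res k S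

section Restrict

variable {k : ℕ} {S : Type v} {η ν : Tuple k S} {l : Fin (k + 1)} {n : ℕ}

theorem coord_eq_of_restrictAt_eq_s15 (h : restrictAt η l n = restrictAt ν l n) {m : Fin (k + 1)}
    (hm : m ≠ l) : η m = ν m := by
  injection h with _ _ hrest
  exact congrFun (congrFun hrest m) hm

theorem apply_eq_of_restrictAt_eq (h : restrictAt η l n = restrictAt ν l n) (m : Fin (k + 1))
    {i : ℕ} (hi : i < n) : η m i = ν m i := by
  by_cases hm : m = l
  · subst hm
    injection h with _ hseq _
    exact congrFun (List.ofFn_injective hseq) ⟨i, hi⟩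
  · rw [coord_eq_of_restrictAt_eq_s15 h hm]

theorem restrictAt_injective (η : Tuple k S) (l : Fin (k + 1)) :
    Function.Injective (restrictAt η l) := fun a b h => by
  simpa [restrictAt] using congrArg (fun ρ => ρ.seq.length) h

theorem eventually_restrictAt_ne (h : ν ≠ η) (l : Fin (k + 1)) :
    ∀ᶠ n in atTop, restrictAt η l n ≠ restrictAt ν l n := by
  obtain ⟨m, hm⟩ := Function.ne_iff.1 h
  obtain ⟨i, hi⟩ := Function.ne_iff.1 hm
  filter_upwards [eventually_gt_atTop i] with n hn he
  exact hi (apply_eq_of_restrictAt_eq he m hn).symm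

theorem eventually_restrictAt_ne_of_finite {X : Set (Tuple k S)} (hX : X.Finite) (η : Tuple k S)
    (l : Fin (k + 1)) :
    ∀ᶠ n in atTop, ∀ ν ∈ X, ν ≠ η → restrictAt η l n ≠ restrictAt ν l n :=
  (eventually_all_finite hX).2 fun _ _ =>
    eventually_imp_distrib_left.2 fun h => eventually_restrictAt_ne h l

theorem eventually_restrictAt_notMem {Y : Set (Piece k S)} (hY : Y.Finite) (η : Tuple k S)
    (l : Fin (k + 1)) : ∀ᶠ n in atTop, Sum.inr (restrictAt η l n) ∉ Y := by
  rw [← Nat.cofinite_eq_atTop]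
  exact (Sum.inr_injective.comp (restrictAt_injective η l)).tendsto_cofinite.eventually
    hY.eventually_cofinite_notMem

end Restrict

section FreeingOrder

variable {k : ℕ} {S : Type v} {F : Tuple k S → Set (Piece k S)} {Ω : Set (Tuple k S)}
  {u : Tuple k S → Finset (Fin (k + 1))}

/-- `η̄↾⟨l,n⟩` has not been met when `η̄` is reached along `r`: it is neither a restriction of an
earlier member of `Ω` nor in `F` of a member of `Ω` up to `η̄`. -/
def FreshAt (F : Tuple k S → Set (Piece k S)) (Ω : Set (Tuple k S))
    (r : Tuple k S → Tuple k S → Prop) (η : Tuple k S) (l : Fin (k + 1)) (n : ℕ) : Prop :=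
  ∀ ν ∈ Ω, (r ν η → restrictAt η l n ≠ restrictAt ν l n) ∧
    (r ν η ∨ ν = η → Sum.inr (restrictAt η l n) ∉ F ν)

/-- A well-order of the tuples witnessing that `Ω` is free when only the coordinates in `u η̄` may
be used at `η̄`. The members of `F η̄` outside `Ω` are inserted later by
`pieceOrder`. -/
structure IsFreeingOrder (F : Tuple k S → Set (Piece k S)) (Ω : Set (Tuple k S))
    (u : Tuple k S → Finset (Fin (k + 1))) (r : Tuple k S → Tuple k S → Prop) : Prop where
  isWellOrder : IsWellOrder (Tuple k S) r
  rel_of_mem : ∀ η ∈ Ω, ∀ ν ∈ Ω, Sum.inl ν ∈ F η → r ν η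
  exists_freshAt : ∀ η ∈ Ω, ∃ l ∈ u η, ∃ n, FreshAt F Ω r η l n

/-- A countable `Ω` can be ordered in type at most `ω` with all members of `F η̄` before `η̄`, so
only finitely many values of `n` are excluded at each stage. -/
theorem exists_isFreeingOrder_of_finite (hΩ : Ω.Countable) (hu : ∀ η ∈ Ω, (u η).Nonempty)
    (hfin : ∀ η, (F η).Finite) (hwf : WellFounded fun ν η => Sum.inl ν ∈ F η) :
    ∃ r, IsFreeingOrder F Ω u r := by
  obtain ⟨f, hf⟩ := countable_iff_exists_injOn.1 hΩ
  obtain ⟨h, hfh, hlt⟩ := exists_nat_rank_ge hwf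
    (fun η => (hfin η).preimage Sum.inl_injective.injOn) f
  have hr : IsWellOrder (Tuple k S) (LexOn (· < ·) h fun _ => WellOrderingRel) :=
    isWellOrder_lexOn _ _ _ fun _ => inferInstance
  refine ⟨_, hr, fun η _ ν _ hν => Or.inl (hlt ν η hν), fun η hη => ?_⟩
  obtain ⟨l, hl⟩ := hu η hη
  have hX : {ν ∈ Ω | h ν ≤ h η}.Finite := finite_sep_le_of_injOn hf hfh (h η)
  obtain ⟨n, restrict_ne, restrict_notMem⟩ :=
    ((eventually_restrictAt_ne_of_finite hX η l).and
      (eventually_restrictAt_notMem (hX.biUnion fun ν _ => hfin ν) η l)).exists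
  refine ⟨l, hl, n, fun ν hν => ⟨fun hνη => ?_, fun hνη hmem => ?_⟩⟩
  · exact restrict_ne ν ⟨hν, le_of_lexOn_lt hνη⟩ (ne_of_irrefl hνη)
  · have hle : h ν ≤ h η := hνη.elim le_of_lexOn_lt fun heq => heq ▸ le_rfl
    exact restrict_notMem (mem_biUnion (⟨hν, hle⟩ : ν ∈ {ν ∈ Ω | h ν ≤ h η}) hmem)

end FreeingOrder

section Regressive

variable {k : ℕ} {Sset : Set Ordinal.{u}} {F : Tuple k Sset → Set (Piece k Sset)}
  {c : Fin (k + 1)} {η ν : Tuple k Sset}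

/-- `sup (range η_c)`. -/
noncomputable def coordSup (c : Fin (k + 1)) (η : Tuple k Sset) : Ordinal.{u} :=
  ⨆ i : ℕ, (η c i : Ordinal)

/-- The supremum of the `c`-th coordinates of the members of `W`. -/
noncomputable def coordBound (c : Fin (k + 1)) (W : Set (Piece k Sset)) : Ordinal.{u} :=
  sSup (⋃ w ∈ W, coordVals w c)

theorem countable_coordVals (w : Piece k Sset) (c : Fin (k + 1)) : (coordVals w c).Countable := by
  rcases w with ν | ρ
  · exact countable_range _
  · simp only [coordVals]
    split_ifs
    · exact (ρ.seq.finite_toSet.image Subtype.val).countable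
    · exact countable_range _

theorem le_coordBound {W : Set (Piece k Sset)} (hW : W.Countable) {w : Piece k Sset} (hw : w ∈ W)
    {o : Ordinal.{u}} (ho : o ∈ coordVals w c) : o ≤ coordBound c W := by
  have := (hW.biUnion fun w _ => countable_coordVals w c).to_subtype
  exact le_csSup Ordinal.bddAbove_of_small (mem_biUnion hw ho)

theorem coordSup_le_coordBound {W : Set (Piece k Sset)} (hW : W.Countable) (hν : Sum.inl ν ∈ W) :
    coordSup c ν ≤ coordBound c W :=
  ciSup_le' fun i => le_coordBound hW hν ⟨i, rfl⟩

theorem apply_mem_coordVals_restrictAt (η : Tuple k Sset) (c l : Fin (k + 1)) {i n : ℕ}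
    (hi : i < n) : (η c i : Ordinal) ∈ coordVals (Sum.inr (restrictAt η l n) : Piece k Sset) c := by
  by_cases hc : c = l
  · simp only [coordVals, restrictAt, hc, dif_pos, List.mem_ofFn]
    exact ⟨η l i, ⟨⟨i, hi⟩, rfl⟩, rfl⟩
  · have vals_eq : coordVals (Sum.inr (restrictAt η l n) : Piece k Sset) c =
        range fun j : ℕ => (η c j : Ordinal) := dif_neg hc
    exact vals_eq ▸ mem_range_self i

theorem exists_class_minimal {T : Type v} {K O : Type*} [LinearOrder O] [WellFoundedLT O]
    (Ω : Set T) (cls : T → K) (σ : T → O) :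
    ∀ x ∈ cls '' Ω, ∃ η ∈ Ω, cls η = x ∧ ∀ ν ∈ Ω, cls ν = x → σ η ≤ σ ν := by
  rintro _ ⟨η₀, hη₀, rfl⟩
  let X := {η ∈ Ω | cls η = cls η₀}
  have hX : X.Nonempty := ⟨η₀, hη₀, rfl⟩
  have hmem := Function.argminOn_mem σ X hX
  exact ⟨_, hmem.1, hmem.2, fun ν hν hcls => Function.argminOn_le σ X ⟨hν, hcls⟩⟩

theorem exists_freshAt_of_coordBound_le {Ω : Set (Tuple k Sset)}
    {r : Tuple k Sset → Tuple k Sset → Prop} [Std.Irrefl r] (hcount : ∀ ν ∈ Ω, (F ν).Countable)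
    (hclass : {ν ∈ Ω | ν c 0 = η c 0 ∧ r ν η}.Finite) {τ : Ordinal.{u}} (hτ : τ < coordSup c η)
    (hbound : ∀ ν ∈ Ω, r ν η ∨ ν = η → coordBound c (F ν) ≤ τ) (l : Fin (k + 1)) :
    ∃ n, FreshAt F Ω r η l n := by
  obtain ⟨i, hi⟩ := exists_lt_of_lt_ciSup hτ
  obtain ⟨n, restrict_ne, hin⟩ :=
    ((eventually_restrictAt_ne_of_finite hclass η l).and (eventually_gt_atTop i)).exists
  refine ⟨n, fun ν hν => ⟨fun hνη heq => ?_, fun hνη hmem => ?_⟩⟩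
  · have class_eq := (apply_eq_of_restrictAt_eq heq c (i.zero_le.trans_lt hin)).symm
    exact restrict_ne ν ⟨hν, class_eq, hνη⟩ (ne_of_irrefl hνη) heq
  · exact hi.not_ge ((le_coordBound (hcount ν hν) hmem
      (apply_mem_coordVals_restrictAt η c l hin)).trans (hbound ν hν hνη))

/-- The classes of `η̄ ↦ η_c(0)` give rise to intervals between the common bound of `F` and the
least `sup (range η_c)` on the class; an interval order keeps the bounds met before `η̄` away from
`sup (range η_c)`, so that a long enough restriction of `η̄` avoids them. -/
theorem exists_isFreeingOrder_of_simple {Ω : Set (Tuple k Sset)}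
    {u : Tuple k Sset → Finset (Fin (k + 1))} (hΩ : Ω.Countable)
    (hu : ∀ η ∈ Ω, (u η).Nonempty) (hcount : ∀ η ∈ Ω, (F η).Countable)
    (hreg : ∀ η ∈ Ω, coordBound c (F η) < coordSup c η)
    (hsimple : ∀ η ∈ Ω, ∀ ν ∈ Ω, η c 0 = ν c 0 → F η = F ν) :
    ∃ r, IsFreeingOrder F Ω u r := by
  obtain ⟨f, hf⟩ := countable_iff_exists_injOn.1 hΩ
  let cls (η : Tuple k Sset) : Sset := η c 0
  choose! rep rep_mem cls_rep rep_min using exists_class_minimal Ω cls (coordSup c)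
  have F_rep {η} (hη : η ∈ Ω) : F (rep (cls η)) = F η :=
    hsimple _ (rep_mem _ ⟨η, hη, rfl⟩) η hη (cls_rep _ ⟨η, hη, rfl⟩)
  obtain ⟨r, hr⟩ := exists_isIntervalOrder (s := coordSup c ∘ rep)
    (t := fun x => coordBound c (F (rep x))) (hΩ.image cls) fun x hx => hreg _ (rep_mem x hx)
  have := hr.isWellOrder
  have fibre_wo : IsWellOrder (Tuple k Sset) (LexOn (· < ·) f fun _ => WellOrderingRel) :=
    isWellOrder_lexOn _ _ _ fun _ => inferInstance
  have lex_wo := isWellOrder_lexOn r cls _ fun _ => fibre_wo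
  refine ⟨_, lex_wo, fun η hη ν hν hmem => Or.inl ?_, fun η hη => ?_⟩
  · refine hr.rel_of_le _ ⟨ν, hν, rfl⟩ _ ⟨η, hη, rfl⟩ ?_
    calc coordSup c (rep (cls ν)) ≤ coordSup c ν := rep_min _ ⟨ν, hν, rfl⟩ ν hν rfl
      _ ≤ coordBound c (F η) := coordSup_le_coordBound (hcount η hη) hmem
      _ = coordBound c (F (rep (cls η))) := by rw [F_rep hη]
  obtain ⟨l, hl⟩ := hu η hη
  obtain ⟨τ, hτ, le_τ⟩ := hr.exists_bound (cls η) ⟨η, hη, rfl⟩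
  have τ_lt : τ < coordSup c η := hτ.trans_le (rep_min _ ⟨η, hη, rfl⟩ η hη rfl)
  have hX : {ν ∈ Ω | f ν ≤ f η}.Finite := finite_sep_le_of_injOn hf (fun _ => le_rfl) (f η)
  refine ⟨l, hl, exists_freshAt_of_coordBound_le hcount (hX.subset ?_)
    (max_lt τ_lt (hreg η hη)) ?_ l⟩
  · rintro ν ⟨hν, cls_eq, hlt | ⟨-, hle⟩⟩
    · exact absurd cls_eq (ne_of_irrefl hlt)
    · exact ⟨hν, le_of_lexOn_lt hle⟩
  · rintro ν hν ((hlt | ⟨cls_eq, -⟩) | rfl)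
    · exact le_max_of_le_left (F_rep hν ▸ le_τ (cls ν) ⟨ν, hν, rfl⟩ hlt)
    · exact le_max_of_le_right (hsimple ν hν η hη cls_eq ▸ le_rfl)
    · exact le_max_right _ _

end Regressive

/-! ### Filtrations by closed sets -/

section OperationClosure

variable {ι : Type} {X : Type v} {G : (ι → X) → Set X} {C D : Set X} {κ : Cardinal.{v}}

/-- One step of closing `C` under the set-valued operation `G`. -/
def closureStep (G : (ι → X) → Set X) (C : Set X) : Set X :=
  C ∪ ⋃ x ∈ univ.pi fun _ => C, G x

/-- The closure of `C` under the set-valued operation `G`. -/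
def operationClosure (G : (ι → X) → Set X) (C : Set X) : Set X :=
  ⋃ n : ℕ, (closureStep G)^[n] C

theorem closureStep_mono : Monotone (closureStep G) := fun _ _ h =>
  union_subset_union h (biUnion_subset_biUnion_left (pi_mono fun _ _ => h))

theorem operationClosure_mono : Monotone (operationClosure G) := fun _ _ h =>
  iUnion_mono fun n => closureStep_mono.iterate n h

theorem subset_operationClosure : C ⊆ operationClosure G C :=
  subset_iUnion (fun n => (closureStep G)^[n] C) 0

theorem subset_operationClosure_of_forall_mem [Finite ι] {x : ι → X}
    (hx : ∀ i, x i ∈ operationClosure G C) : G x ⊆ operationClosure G C := by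
  have step_mono : Monotone fun n => (closureStep G)^[n] C :=
    monotone_nat_of_le_succ fun n => by
      rw [Function.iterate_succ_apply']
      exact subset_union_left
  choose N hN using fun i => mem_iUnion.1 (hx i)
  obtain ⟨M, hM⟩ := Finite.exists_le N
  have hxM : x ∈ univ.pi fun _ => (closureStep G)^[M] C := fun i _ => step_mono (hM i) (hN i)
  refine subset_iUnion_of_subset (M + 1) ?_
  rw [Function.iterate_succ_apply']
  exact subset_union_of_subset_right (subset_biUnion_of_mem hxM) _

theorem mk_univ_pi_const_le [Finite ι] (hκ : ℵ₀ ≤ κ) (hC : #C ≤ κ) :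
    #(univ.pi fun _ : ι => C) ≤ κ := by
  obtain ⟨n, hn⟩ := Cardinal.lt_aleph0.1 (mk_lt_aleph0 (α := ι))
  calc #(univ.pi fun _ : ι => C) = #(ι → C) := mk_congr (Equiv.Set.univPi _)
    _ = #C ^ n := by simp [hn]
    _ ≤ κ ^ n := power_le_power_right hC
    _ ≤ κ := mod_cast power_nat_le hκ

theorem mk_closureStep_le [Finite ι] (hκ : ℵ₀ ≤ κ) (hG : ∀ x, #(G x) ≤ κ) (hC : #C ≤ κ) :
    #(closureStep G C) ≤ κ :=
  (mk_union_le _ _).trans <| add_le_of_le hκ hC <| (mk_biUnion_le _ _).trans <|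
    mul_le_of_le hκ (mk_univ_pi_const_le hκ hC) (ciSup_le' fun x => hG x)

theorem mk_operationClosure_le [Finite ι] (hκ : ℵ₀ ≤ κ) (hG : ∀ x, #(G x) ≤ κ) (hC : #C ≤ κ) :
    #(operationClosure G C) ≤ κ := by
  have iterate_le (n : ℕ) : #((closureStep G)^[n] C : Set X) ≤ κ := by
    induction n with
    | zero => exact hC
    | succ n ih =>
      rw [Function.iterate_succ_apply']
      exact mk_closureStep_le hκ hG ih
  have union_le := mk_iUnion_le_lift.{v, 0} fun n => ((closureStep G)^[n] C : Set X)
  simp only [mk_nat, lift_aleph0, lift_uzero] at union_le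
  exact union_le.trans (mul_le_of_le hκ hκ (ciSup_le' iterate_le))

end OperationClosure

theorem exists_ordinal_rank_mk_le {α : Type v} {κ : Cardinal.{v}} (hκ : ℵ₀ ≤ κ)
    (hα : #α ≤ Order.succ κ) : ∃ g : α → Ordinal.{v}, ∀ a, #{x | g x ≤ g a} ≤ κ := by
  obtain ⟨q, hq, ord_eq⟩ := exists_ord_eq α
  refine ⟨Ordinal.typein q, fun a => ?_⟩
  have initial_le : #{x | q x a} ≤ κ := by
    have typein_lt := card_typein_lt a ord_eq
    rw [Ordinal.card_typein] at typein_lt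
    exact Order.lt_succ_iff.1 (typein_lt.trans_le hα)
  have sep_subset : {x | Ordinal.typein q x ≤ Ordinal.typein q a} ⊆ insert a {x | q x a} :=
    fun x hx => hx.lt_or_eq.elim (fun h => Or.inr ((Ordinal.typein_lt_typein q).1 h))
      fun h => Or.inl ((Ordinal.typein_inj q).1 h)
  calc #{x | Ordinal.typein q x ≤ Ordinal.typein q a}
      ≤ #(insert a {x | q x a} : Set α) := mk_le_mk_of_subset sep_subset
    _ ≤ #{x | q x a} + 1 := mk_insert_le
    _ ≤ κ := add_le_of_le hκ initial_le (one_le_aleph0.trans hκ)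

section Filtration

variable {k : ℕ} {S : Type v} {F : Tuple k S → Set (Piece k S)} {Ω : Set (Tuple k S)}
  {u : Tuple k S → Finset (Fin (k + 1))} {C : Ordinal.{v} → Set (ℕ → S)} {η ν : Tuple k S}
  {l : Fin (k + 1)} {n : ℕ}

/-- The coordinates of a full or restricted tuple which are infinite sequences. -/
def infiniteCoords : Piece k S → Set (ℕ → S)
  | Sum.inl ν => range ν
  | Sum.inr ρ => range fun m : {m // m ≠ ρ.m} => ρ.rest m.1 m.2

theorem countable_infiniteCoords (w : Piece k S) : (infiniteCoords w).Countable := by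
  rcases w with ν | ρ <;> exact countable_range _

/-- An increasing family of sets of sequences, each closed under passing from a tuple `η̄` to the
infinite coordinates of the members of `F η̄`. -/
structure IsFiltration (F : Tuple k S → Set (Piece k S)) (C : Ordinal.{v} → Set (ℕ → S)) :
    Prop where
  mono : Monotone C
  infiniteCoords_subset : ∀ a η, (∀ m, η m ∈ C a) → ∀ w ∈ F η, infiniteCoords w ⊆ C a

theorem exists_isFiltration (hF : ∀ η, (F η).Countable) {κ : Cardinal.{v}} (hκ : ℵ₀ ≤ κ)
    (hΩ : #Ω ≤ Order.succ κ) :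
    ∃ C, IsFiltration F C ∧ ∀ η ∈ Ω, ∃ a, (∀ m, η m ∈ C a) ∧ #(C a) ≤ κ := by
  obtain ⟨g, hg⟩ := exists_ordinal_rank_mk_le hκ hΩ
  let G (η : Tuple k S) : Set (ℕ → S) := ⋃ w ∈ F η, infiniteCoords w
  let B (a : Ordinal.{v}) : Set (ℕ → S) := ⋃ η ∈ {η : Ω | g η ≤ a}, range η.1
  have B_mono : Monotone B := fun a b hab =>
    biUnion_subset_biUnion_left fun η hη => le_trans hη hab
  have mk_le_of_countable {X : Set (ℕ → S)} (hX : X.Countable) : #X ≤ κ :=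
    (le_aleph0_iff_set_countable.2 hX).trans hκ
  refine ⟨operationClosure G ∘ B, ⟨operationClosure_mono.comp B_mono, fun a η hη w hw => ?_⟩,
    fun η hη => ⟨g ⟨η, hη⟩, fun m => subset_operationClosure ?_, ?_⟩⟩
  · exact (subset_biUnion_of_mem hw).trans (subset_operationClosure_of_forall_mem (G := G) hη)
  · exact mem_biUnion (x := (⟨η, hη⟩ : Ω)) (le_refl (g ⟨η, hη⟩)) (mem_range_self m)
  · refine mk_operationClosure_le hκ
      (fun η => mk_le_of_countable ((hF η).biUnion fun w _ => countable_infiniteCoords w)) ?_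
    exact (mk_biUnion_le _ _).trans <| mul_le_of_le hκ (hg _) <| ciSup_le' fun η =>
      mk_le_of_countable (countable_range _)

/-- The first stage of `C` containing all coordinates of `η̄` (the junk value is `0`). -/
noncomputable def entryStage (C : Ordinal.{v} → Set (ℕ → S)) (η : Tuple k S) : Ordinal.{v} :=
  sInf {a | ∀ m, η m ∈ C a}

theorem entryStage_le {a : Ordinal.{v}} (h : ∀ m, η m ∈ C a) : entryStage C η ≤ a :=
  csInf_le' h

theorem mem_entryStage (h : ∃ a, ∀ m, η m ∈ C a) (m : Fin (k + 1)) : η m ∈ C (entryStage C η) :=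
  csInf_mem (s := {a | ∀ m, η m ∈ C a}) h m

/-- All coordinates of `η̄` other than the `l`-th one lie in a stage before its entry stage. -/
def EntersEarlyOff (C : Ordinal.{v} → Set (ℕ → S)) (η : Tuple k S) (l : Fin (k + 1)) : Prop :=
  ∃ a < entryStage C η, ∀ m ≠ l, η m ∈ C a

theorem EntersEarlyOff.unique (hC : Monotone C) {l' : Fin (k + 1)} (h : EntersEarlyOff C η l)
    (h' : EntersEarlyOff C η l') : l = l' := by
  obtain ⟨a, ha, hal⟩ := h
  obtain ⟨b, hb, hbl⟩ := h'
  by_contra hne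
  refine (max_lt ha hb).not_ge (entryStage_le fun m => ?_)
  by_cases hm : m = l
  · exact hC (le_max_right a b) (hbl m (hm ▸ hne))
  · exact hC (le_max_left a b) (hal m hm)

theorem entersEarlyOff_of_restrictAt_eq (hν : ∀ m, ν m ∈ C (entryStage C ν))
    (hlt : entryStage C ν < entryStage C η) (h : restrictAt η l n = restrictAt ν l n) :
    EntersEarlyOff C η l :=
  ⟨_, hlt, fun m hm => coord_eq_of_restrictAt_eq_s15 h hm ▸ hν m⟩

namespace IsFiltration

theorem entryStage_le_of_mem (hC : IsFiltration F C) (hη : ∀ m, η m ∈ C (entryStage C η))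
    (hν : Sum.inl ν ∈ F η) : entryStage C ν ≤ entryStage C η :=
  entryStage_le fun m => hC.infiniteCoords_subset _ η hη _ hν ⟨m, rfl⟩

theorem entersEarlyOff_of_restrictAt_mem (hC : IsFiltration F C)
    (hν : ∀ m, ν m ∈ C (entryStage C ν)) (hlt : entryStage C ν < entryStage C η)
    (h : Sum.inr (restrictAt η l n) ∈ F ν) : EntersEarlyOff C η l :=
  ⟨_, hlt, fun m hm => hC.infiniteCoords_subset _ ν hν _ h ⟨⟨m, hm⟩, rfl⟩⟩

/-- Only the coordinate off which `η̄` enters early can be spoilt by earlier layers, so it suffices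
to treat each layer separately while avoiding that coordinate. -/
theorem exists_isFreeingOrder (hC : IsFiltration F C) {u' : Tuple k S → Finset (Fin (k + 1))}
    (hΩ : ∀ η ∈ Ω, ∃ a, ∀ m, η m ∈ C a)
    (hu' : ∀ η ∈ Ω, ∀ l ∈ u' η, l ∈ u η ∧ ¬EntersEarlyOff C η l)
    (hlayer : ∀ a, ∃ r, IsFreeingOrder F {η ∈ Ω | entryStage C η = a} u' r) :
    ∃ r, IsFreeingOrder F Ω u r := by
  choose R hR using hlayer
  have hmem {η} (hη : η ∈ Ω) := mem_entryStage (hΩ η hη)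
  have lex_wo : IsWellOrder (Tuple k S) (LexOn (· < ·) (entryStage C) R) :=
    isWellOrder_lexOn _ _ _ fun a => (hR a).isWellOrder
  refine ⟨_, lex_wo, fun η hη ν hν hνη => ?_, fun η hη => ?_⟩
  · rcases (hC.entryStage_le_of_mem (hmem hη) hνη).lt_or_eq with hlt | heq
    · exact Or.inl hlt
    · exact Or.inr ⟨heq, (hR _).rel_of_mem η ⟨hη, rfl⟩ ν ⟨hν, heq⟩ hνη⟩
  obtain ⟨l, hl, n, hfresh⟩ := (hR _).exists_freshAt η ⟨hη, rfl⟩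
  obtain ⟨hlu, not_early⟩ := hu' η hη l hl
  refine ⟨l, hlu, n, fun ν hν => ⟨fun hνη => ?_, fun hνη hνF => ?_⟩⟩
  · rcases hνη with hlt | ⟨heq, hrel⟩
    · exact fun h => not_early (entersEarlyOff_of_restrictAt_eq (hmem hν) hlt h)
    · exact (hfresh ν ⟨hν, heq⟩).1 hrel
  · rcases hνη with (hlt | ⟨heq, hrel⟩) | rfl
    · exact not_early (hC.entersEarlyOff_of_restrictAt_mem (hmem hν) hlt hνF)
    · exact (hfresh ν ⟨hν, heq⟩).2 (Or.inl hrel) hνF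
    · exact (hfresh ν ⟨hν, rfl⟩).2 (Or.inr rfl) hνF

theorem mk_layer_le (hC : IsFiltration F C) {κ : Cardinal.{v}} (hκ : ℵ₀ ≤ κ)
    (hΩ : ∀ η ∈ Ω, ∃ a, (∀ m, η m ∈ C a) ∧ #(C a) ≤ κ) (a : Ordinal.{v}) :
    #{η ∈ Ω | entryStage C η = a} ≤ κ := by
  rcases {η ∈ Ω | entryStage C η = a}.eq_empty_or_nonempty with hempty | ⟨η, hη, rfl⟩
  · simp [hempty]
  obtain ⟨b, hb, hcard⟩ := hΩ η hη
  have stage_le : #(C (entryStage C η)) ≤ κ :=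
    (mk_le_mk_of_subset (hC.mono (entryStage_le hb))).trans hcard
  refine (mk_le_mk_of_subset ?_).trans (mk_univ_pi_const_le (ι := Fin (k + 1)) hκ stage_le)
  rintro ν ⟨hν, hstage⟩ m -
  have ⟨c, hc, _⟩ := hΩ ν hν
  exact hstage ▸ mem_entryStage ⟨c, hc⟩ m

end IsFiltration

open Classical in
/-- Passing from `ℵ_f` to `ℵ_{f+1}` costs one coordinate. -/
theorem exists_isFreeingOrder_of_mk_le_aleph (hF : ∀ η, (F η).Countable) {Λ : Set (Tuple k S)}
    (hbase : ∀ Ω ⊆ Λ, ∀ u : Tuple k S → Finset (Fin (k + 1)), Ω.Countable →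
      (∀ η ∈ Ω, (u η).Nonempty) → ∃ r, IsFreeingOrder F Ω u r)
    (f : ℕ) (hΩΛ : Ω ⊆ Λ) (hΩ : #Ω ≤ aleph f) (hu : ∀ η ∈ Ω, f < (u η).card) :
    ∃ r, IsFreeingOrder F Ω u r := by
  induction f generalizing Ω u with
  | zero =>
    refine hbase Ω hΩΛ u (le_aleph0_iff_set_countable.1 (by simpa using hΩ)) fun η hη => ?_
    exact Finset.card_pos.1 (hu η hη)
  | succ f ih =>
    have hκ : ℵ₀ ≤ aleph (f : Ordinal.{v}) := aleph0_le_aleph _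
    obtain ⟨C, hC, hstage⟩ := exists_isFiltration hF hκ (Ω := Ω) (by simpa using hΩ)
    refine hC.exists_isFreeingOrder (u' := fun η => {l ∈ u η | ¬EntersEarlyOff C η l})
      (fun η hη => (hstage η hη).imp fun _ => And.left) (fun η _ l => Finset.mem_filter.1)
      fun a => ih (fun η hη => hΩΛ hη.1) (hC.mk_layer_le hκ hstage a) fun η hη => ?_
    have early_le_one : ({l ∈ u η | EntersEarlyOff C η l} : Finset _).card ≤ 1 :=
      Finset.card_le_one.2 fun l hl l' hl' =>
        (Finset.mem_filter.1 hl).2.unique hC.mono (Finset.mem_filter.1 hl').2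
    have card_split := Finset.card_filter_add_card_filter_not (s := u η) (EntersEarlyOff C η)
    have card_lt := hu η hη.1
    lia

end Filtration

/-! ### From freeing orders to enumerations -/

theorem exists_ordinal_enumeration {α : Type v} (R : α → α → Prop) [IsWellOrder α R] (U : Set α) :
    ∃ (o : Ordinal.{v}) (e : Iio o → α), Function.Injective e ∧ range e = U ∧
      ∀ a b : Iio o, (a : Ordinal) < b ↔ R (e a) (e b) := by
  let e := Ordinal.enum (Subrel R (· ∈ U))
  refine ⟨_, fun a => (e a : α), Subtype.val_injective.comp e.injective, ?_,
    fun a b => e.map_rel_iff.symm⟩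
  exact (e.surjective.range_comp Subtype.val).trans Subtype.range_coe

section PieceOrder

variable {k : ℕ} {S : Type v} {F : Tuple k S → Set (Piece k S)} {Ω : Set (Tuple k S)}
  {u : Tuple k S → Finset (Fin (k + 1))} {r : Tuple k S → Tuple k S → Prop}

/-- The members `η̄` of `Ω` such that `w` is `η̄` itself or a member of `F η̄`. -/
def users (F : Tuple k S → Set (Piece k S)) (Ω : Set (Tuple k S)) (w : Piece k S) :
    Set (Tuple k S) :=
  {η ∈ Ω | w = Sum.inl η ∨ w ∈ F η}

/-- The rank along `r` of the first user of `w` (the junk value is `0`). -/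
noncomputable def firstUse (F : Tuple k S → Set (Piece k S)) (Ω : Set (Tuple k S))
    (r : Tuple k S → Tuple k S → Prop) [IsWellOrder _ r] (w : Piece k S) : Ordinal.{v} :=
  sInf (Ordinal.typein r '' users F Ω w)

/-- Pieces are listed by their first use; the member of `Ω` using new pieces comes after them. -/
def pieceOrder (F : Tuple k S → Set (Piece k S)) (Ω : Set (Tuple k S))
    (r : Tuple k S → Tuple k S → Prop) [IsWellOrder _ r] : Piece k S → Piece k S → Prop :=
  LexOn (· < ·) (firstUse F Ω r) fun _ => LexOn (· < ·) (· ∈ Sum.inl '' Ω) fun _ => WellOrderingRel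

instance isWellOrder_pieceOrder [IsWellOrder _ r] : IsWellOrder _ (pieceOrder F Ω r) :=
  isWellOrder_lexOn _ _ _ fun _ => isWellOrder_lexOn _ _ _ fun _ => inferInstance

theorem firstUse_le_typein [IsWellOrder _ r] {η : Tuple k S} (hη : η ∈ Ω) {w : Piece k S}
    (hw : w ∈ F η) : firstUse F Ω r w ≤ Ordinal.typein r η :=
  csInf_le' ⟨η, ⟨hη, Or.inr hw⟩, rfl⟩

theorem rel_or_eq_of_typein_le [IsWellOrder _ r] {η ν : Tuple k S}
    (h : Ordinal.typein r ν ≤ Ordinal.typein r η) : r ν η ∨ ν = η :=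
  h.lt_or_eq.imp (Ordinal.typein_lt_typein r).1 (Ordinal.typein_inj r).1

namespace IsFreeingOrder

variable [IsWellOrder _ r] {η ν : Tuple k S} {w : Piece k S} {ρ : Res k S}

theorem firstUse_inl (hr : IsFreeingOrder F Ω u r) (hη : η ∈ Ω) :
    firstUse F Ω r (Sum.inl η) = Ordinal.typein r η := by
  have η_use : η ∈ users F Ω (Sum.inl η) := ⟨hη, Or.inl rfl⟩
  refine le_antisymm (csInf_le' (mem_image_of_mem _ η_use))
    (le_csInf ⟨_, mem_image_of_mem _ η_use⟩ ?_)
  rintro _ ⟨ν, ⟨hν, heq | hmem⟩, rfl⟩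
  · rw [Sum.inl_injective heq]
  · exact ((Ordinal.typein_lt_typein r).2 (hr.rel_of_mem ν hν η hη hmem)).le

theorem pieceOrder_of_mem (hr : IsFreeingOrder F Ω u r) (hη : η ∈ Ω) (hw : w ∈ F η) :
    pieceOrder F Ω r w (Sum.inl η) := by
  have use_le : firstUse F Ω r w ≤ firstUse F Ω r (Sum.inl η) :=
    hr.firstUse_inl hη ▸ firstUse_le_typein hη hw
  rcases use_le.lt_or_eq with hlt | heq
  · exact Or.inl hlt
  have w_notMem : w ∉ Sum.inl '' Ω := by
    rintro ⟨ν, hν, rfl⟩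
    rw [hr.firstUse_inl hη, hr.firstUse_inl hν] at heq
    exact ne_of_irrefl (hr.rel_of_mem η hη ν hν hw) ((Ordinal.typein_inj r).1 heq)
  exact Or.inr ⟨heq, Or.inl (lt_iff_le_not_ge.2
    ⟨fun h => absurd h w_notMem, fun h => w_notMem (h (mem_image_of_mem _ hη))⟩)⟩

theorem rel_of_pieceOrder (hr : IsFreeingOrder F Ω u r) (hη : η ∈ Ω) (hν : ν ∈ Ω)
    (h : pieceOrder F Ω r (Sum.inl ν) (Sum.inl η)) : r ν η := by
  have use_le := le_of_lexOn_lt h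
  rw [hr.firstUse_inl hη, hr.firstUse_inl hν] at use_le
  exact (rel_or_eq_of_typein_le use_le).resolve_right fun heq =>
    ne_of_irrefl h (congrArg Sum.inl heq)

theorem exists_use_of_pieceOrder (hr : IsFreeingOrder F Ω u r) (hη : η ∈ Ω)
    (h : pieceOrder F Ω r (Sum.inr ρ) (Sum.inl η)) (hρ : Sum.inr ρ ∈ ⋃ ν ∈ Ω, F ν) :
    ∃ ν ∈ Ω, Sum.inr ρ ∈ F ν ∧ (r ν η ∨ ν = η) := by
  obtain ⟨ν₀, hν₀, hmem₀⟩ := mem_iUnion₂.1 hρ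
  obtain ⟨ν, ⟨hν, heq | hmem⟩, use_eq⟩ :=
    csInf_mem (s := Ordinal.typein r '' users F Ω (Sum.inr ρ)) ⟨_, ν₀, ⟨hν₀, Or.inr hmem₀⟩, rfl⟩
  · cases heq
  · exact ⟨ν, hν, hmem, rel_or_eq_of_typein_le
      (use_eq.le.trans ((le_of_lexOn_lt h).trans_eq (hr.firstUse_inl hη)))⟩

end IsFreeingOrder

end PieceOrder

section FreeFor

variable {k : ℕ} {Sset : Set Ordinal.{u}} {Λ Λ' : Set (Tuple k Sset)}
  {F : Λ → Set (FullOrRes k Sset)} {c : Fin (k + 1)}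

/-- The extension of a function on `Λ` to all tuples by the value `∅`. -/
def extendByEmpty (F : Λ → Set (FullOrRes k Sset)) (η : Tuple k Sset) : Set (FullOrRes k Sset) :=
  ⋃ h : η ∈ Λ, F ⟨η, h⟩

theorem extendByEmpty_coe (η : Λ) : extendByEmpty F η = F η := by
  simp [extendByEmpty]

theorem freeFor_of_isFreeingOrder {u : Tuple k Sset → Finset (Fin (k + 1))}
    {r : Tuple k Sset → Tuple k Sset → Prop} (hr : IsFreeingOrder (extendByEmpty F) Λ' u r) :
    FreeFor Λ F Λ' := by
  have := hr.isWellOrder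
  choose! l _ n hfresh using hr.exists_freshAt
  obtain ⟨o, e, e_inj, e_range, e_lt⟩ :=
    exists_ordinal_enumeration (pieceOrder (extendByEmpty F) Λ' r)
      (Sum.inl '' Λ' ∪ ⋃ (η : Λ) (_ : (η : Tuple k Sset) ∈ Λ'), F η)
  refine ⟨o, e, fun α => Sum.elim l (fun _ => 0) (e α), e_inj, e_range,
    fun α η hα hη w hw => ?_, fun α η hα hη => ⟨n η, fun β hβα => ?_⟩⟩
  · obtain ⟨β, rfl⟩ : w ∈ range e := e_range ▸ Or.inr (mem_iUnion₂.2 ⟨η, hη, hw⟩)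
    refine ⟨β, (e_lt β α).2 ?_, Or.inl rfl⟩
    exact hα ▸ hr.pieceOrder_of_mem hη ((extendByEmpty_coe η).symm ▸ hw)
  rw [e_lt, hα] at hβα
  simp only [hα, Sum.elim_inl]
  refine ⟨fun hβ => ?_, fun ν hβ hν => ?_⟩
  · have used : e β ∈ ⋃ ν ∈ Λ', extendByEmpty F ν := by
      rcases e_range ▸ mem_range_self β with ⟨ν, -, hν⟩ | hmem
      · cases hν.trans hβ
      · obtain ⟨ν, hν, hmem⟩ := mem_iUnion₂.1 hmem
        exact mem_iUnion₂.2 ⟨ν, hν, (extendByEmpty_coe ν).symm ▸ hmem⟩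
    rw [hβ] at hβα used
    obtain ⟨ν, hν, hmem, hνη⟩ := hr.exists_use_of_pieceOrder hη hβα used
    exact (hfresh η hη ν hν).2 hνη hmem
  · exact (hfresh η hη ν hν).1 (hr.rel_of_pieceOrder hη hν (hβ ▸ hβα))

theorem coordBound_extendByEmpty_lt
    (hreg : ∀ η : Λ, coordBound c (F η) < coordSup c η.1) {η : Tuple k Sset} (hη : η ∈ Λ) :
    coordBound c (extendByEmpty F η) < coordSup c η :=
  (extendByEmpty_coe ⟨η, hη⟩).symm ▸ hreg ⟨η, hη⟩

theorem wellFounded_mem_extendByEmpty (hcount : ∀ η, (F η).Countable)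
    (hreg : ∀ η : Λ, coordBound c (F η) < coordSup c η.1) :
    WellFounded fun ν η => Sum.inl ν ∈ extendByEmpty F η := by
  refine Subrelation.wf (fun {ν η} hν => ?_) (InvImage.wf (coordSup c) wellFounded_lt)
  obtain ⟨hη, hmem⟩ := mem_iUnion.1 hν
  exact (coordSup_le_coordBound (hcount _) hmem).trans_lt (hreg ⟨η, hη⟩)

theorem exists_isFreeingOrder_of_countable (hcount : ∀ η, (F η).Countable)
    (hreg : ∀ η : Λ, coordBound c (F η) < coordSup c η.1)
    (hF : Finitary F ∨ ∀ η η' : Λ, η.1 c 0 = η'.1 c 0 → F η = F η')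
    {Ω : Set (Tuple k Sset)} (hΩΛ : Ω ⊆ Λ) {u : Tuple k Sset → Finset (Fin (k + 1))}
    (hΩ : Ω.Countable) (hu : ∀ η ∈ Ω, (u η).Nonempty) :
    ∃ r, IsFreeingOrder (extendByEmpty F) Ω u r := by
  rcases hF with hfin | hsimple
  · exact exists_isFreeingOrder_of_finite hΩ hu (fun η => finite_iUnion fun h => hfin ⟨η, h⟩)
      (wellFounded_mem_extendByEmpty hcount hreg)
  · refine exists_isFreeingOrder_of_simple hΩ hu
      (fun η _ => countable_iUnion fun h => hcount ⟨η, h⟩)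
      (fun η hη => coordBound_extendByEmpty_lt hreg (hΩΛ hη)) fun η hη ν hν h => ?_
    rw [extendByEmpty_coe ⟨η, hΩΛ hη⟩, extendByEmpty_coe ⟨ν, hΩΛ hν⟩]
    exact hsimple ⟨η, hΩΛ hη⟩ ⟨ν, hΩΛ hν⟩ h

end FreeFor

end Sh883

open Sh883 in
theorem stmt15_general {k : ℕ} {Sset : Set Ordinal.{u}} {Λ : Set (Fin (k + 1) → ℕ → ↥Sset)}
    {F : ↥Λ → Set (FullOrRes k Sset)} (c : Fin (k + 1)) (hcount : ∀ η, (F η).Countable)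
    (hreg : ∀ η : ↥Λ, sSup (⋃ w ∈ F η, coordVals w c) < ⨆ i : ℕ, (η.1 c i : Ordinal))
    (hF : Finitary F ∨ ∀ η η' : ↥Λ, η.1 c 0 = η'.1 c 0 → F η = F η')
    {Λ' : Set (Fin (k + 1) → ℕ → ↥Sset)} (hsub : Λ' ⊆ Λ) (hcard : #Λ' < aleph (k + 1)) :
    FreeFor Λ F Λ' := by
  have mk_le : #Λ' ≤ aleph k := by
    rw [← Order.lt_succ_iff, succ_aleph]
    exact hcard
  obtain ⟨r, hr⟩ := exists_isFreeingOrder_of_mk_le_aleph (u := fun _ => Finset.univ)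
    (fun η => Set.countable_iUnion fun h => hcount ⟨η, h⟩)
    (fun Ω hΩΛ u hΩ hu => exists_isFreeingOrder_of_countable hcount hreg hF hΩΛ hΩ hu)
    k hsub mk_le (fun η _ => by simp)
  exact freeFor_of_isFreeingOrder hr

open Sh883 in
/-- Let `x = (Sset, Λ)` be a combinatorial `k`-parameter with `Sset` a
set of ordinals, and let `F` be a regressive function on `x` which is finitary or simple.
Then `(x, F)` is `ℵ_{k+1}`-free: every `Λ' ⊆ Λ` of cardinality less than `ℵ_{k+1}` is
free for `(x, F)`. -/
theorem stmt15 (k : ℕ) (Sset : Set Ordinal.{u}) (Λ : Set (Fin (k + 1) → ℕ → ↥Sset))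
    (F : ↥Λ → Set (FullOrRes k Sset)) (hreg : Regressive Λ F)
    (hfs : Finitary F ∨ Simple F)
    (Λ' : Set (Fin (k + 1) → ℕ → ↥Sset)) (hsub : Λ' ⊆ Λ)
    (hcard : #Λ' < Cardinal.aleph (k + 1)) :
    FreeFor Λ F Λ' :=
  stmt15_general (Fin.last k) hreg.1 (fun η => hreg.2.2 η _) hfs hsub hcard
end

section
/- Let x = (S, Λ, a) be an abelian-group k-parameter, let U be a set of functions from ℕ to S, and let u be a finite set of functions from ℕ to S disjoint from U. Then G_{U,u} is a subgroup of G_{U∪u}; moreover G_{U,u} is a pure subgroup of G_{U∪u}, and G_{U∪u} is a pure subgroup of G_x. -/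
open Cardinal

/-!
Call a set `T` of generators closed if, once it contains some `y_{η̄,n}`, it contains every
generator occurring in a relation of `η̄`. The generators of `G_U` form a closed set, and closed
sets are stable under unions, so it suffices to show that a closed set generates a saturated
subgroup.

Let `H_N` be the subgroup generated by `z`, the `x_ν` and the `y_{η̄,N}`. The relations give
`H_N ≤ H_{N+1}`, and `G_x` is the union of the `H_N`. Over `ℚ` the relations of a tuple `η̄` can be
solved both upwards and downwards from any prescribed value of `y_{η̄,N}`, so each of the listed
generators of `H_N` has a coordinate functional `G_x → ℚ`. The functionals of the generators outside
a closed set `T` vanish on `T`, and an element of `H_N` lies in the subgroup generated by `T` as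
soon as all of them vanish at it.
-/

namespace Sh883

theorem exists_mem_nsmul_eq_of_nsmulSaturated {G : Type*} [AddMonoid G] {H : AddSubmonoid G}
    (hH : H.NSMulSaturated) {n : ℕ} (hn : 0 < n) {g : G} (hg : g ∈ H) (hdiv : ∃ y, n • y = g) :
    ∃ y ∈ H, n • y = g := by
  obtain ⟨y, rfl⟩ := hdiv
  exact ⟨y, (hH hg).resolve_left hn.ne', rfl⟩

theorem exists_seq_mul_succ_eq_add {K : Type*} [Field K] {c : ℕ → K} (hc : ∀ n, c n ≠ 0)
    (s : ℕ → K) (N : ℕ) (v : K) :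
    ∃ y : ℕ → K, y N = v ∧ ∀ n, c n * y (n + 1) = y n + s n := by
  induction N generalizing v with
  | zero =>
    exact ⟨Nat.rec v fun n yn ↦ (yn + s n) / c n, rfl, fun n ↦ mul_div_cancel₀ _ (hc n)⟩
  | succ N ih =>
    obtain ⟨y, hyN, hy⟩ := ih (c N * v - s N)
    refine ⟨y, mul_left_cancel₀ (hc N) ?_, hy⟩
    rw [hy, hyN, sub_add_cancel]

theorem eq_zero_of_nsmul_succ_eq {M : Type*} [AddMonoid M] [IsAddTorsionFree M] {c : ℕ → ℕ}
    (hc : ∀ n, c n ≠ 0) {y : ℕ → M} (hy : ∀ n, c n • y (n + 1) = y n) {N : ℕ} (hN : y N = 0)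
    (n : ℕ) : y n = 0 := by
  have eq_zero_iff (n : ℕ) : y n = 0 ↔ y 0 = 0 := by
    induction n with
    | zero => rfl
    | succ n ih => rw [← ih, ← hy n, nsmul_eq_zero_iff_right (hc n)]
  exact (eq_zero_iff n).2 ((eq_zero_iff N).1 hN)

variable {k : ℕ} {S : Type u} {Λ : Set (Fin (k + 1) → ℕ → S)} (a : ↥Λ → ℕ → ℤ)

/-- The image in `G_x` of a generator; `xg`, `yg` and `zg` are its restrictions to the three kinds
of generators. -/
def gen (i : Gen k S Λ) : Gx a :=
  QuotientAddGroup.mk (FreeAbelianGroup.of i)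

theorem factorial_nsmul_gen_Y_succ (η : ↥Λ) (n : ℕ) :
    n.factorial • gen a (.Y η (n + 1)) =
      gen a (.Y η n) + a η n • gen a .Z + ∑ m, gen a (.X (resMem η m n)) := by
  have mk_relEl : QuotientAddGroup.mk' (relSub a) (relEl a η n) = 0 :=
    (QuotientAddGroup.eq_zero_iff _).2 (AddSubgroup.subset_closure ⟨η, n, rfl⟩)
  rw [relEl, map_sub, map_sub, map_sub, map_zsmul, map_zsmul, map_sum, natCast_zsmul, sub_sub,
    sub_sub, sub_eq_zero, ← add_assoc] at mk_relEl
  exact mk_relEl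

theorem closure_range_gen : AddSubgroup.closure (Set.range (gen a)) = ⊤ := by
  refine (AddSubgroup.eq_top_iff' _).2 fun g ↦ ?_
  obtain ⟨w, rfl⟩ := QuotientAddGroup.mk'_surjective (relSub a) g
  induction w using FreeAbelianGroup.induction_on with
  | zero => exact zero_mem _
  | of i => exact AddSubgroup.subset_closure ⟨i, rfl⟩
  | neg i hi => exact neg_mem hi
  | add v w hv hw => exact add_mem hv hw

theorem exists_hom_gen_eq {M : Type*} [AddCommGroup M] (φ : Gen k S Λ → M)
    (hφ : ∀ η n, n.factorial • φ (.Y η (n + 1)) =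
      φ (.Y η n) + a η n • φ .Z + ∑ m, φ (.X (resMem η m n))) :
    ∃ f : Gx a →+ M, ∀ i, f (gen a i) = φ i := by
  have relSub_le_ker : relSub a ≤ (FreeAbelianGroup.lift φ).ker := by
    refine (AddSubgroup.closure_le _).2 ?_
    rintro _ ⟨η, n, rfl⟩
    simp only [SetLike.mem_coe, AddMonoidHom.mem_ker, relEl, natCast_zsmul, map_sub, map_nsmul,
      map_zsmul, map_sum, FreeAbelianGroup.lift_apply_of, hφ]
    abel
  exact ⟨QuotientAddGroup.lift _ _ relSub_le_ker, FreeAbelianGroup.lift_apply_of φ⟩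

variable (Λ) in
/-- The generators `z`, `x_ν` and `y_{η̄,N}`, for a fixed `N`. Their images form a basis of the
subgroup they generate. -/
def stage (N : ℕ) : Set (Gen k S Λ) :=
  {.Z} ∪ Set.range .X ∪ Set.range (.Y · N)

theorem Z_mem_stage (N : ℕ) : Gen.Z ∈ stage Λ N := .inl (.inl rfl)

theorem X_mem_stage (ν : ↥(LambdaRes Λ)) (N : ℕ) : Gen.X ν ∈ stage Λ N := .inl (.inr ⟨ν, rfl⟩)

theorem Y_mem_stage (η : ↥Λ) (N : ℕ) : Gen.Y η N ∈ stage Λ N := .inr ⟨η, rfl⟩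

theorem monotone_closure_gen_image_stage :
    Monotone fun N ↦ AddSubgroup.closure (gen a '' stage Λ N) := by
  refine monotone_nat_of_le_succ fun N ↦ (AddSubgroup.closure_le _).2 ?_
  have gen_mem {i : Gen k S Λ} (hi : i ∈ stage Λ (N + 1)) :
      gen a i ∈ AddSubgroup.closure (gen a '' stage Λ (N + 1)) :=
    AddSubgroup.subset_closure (Set.mem_image_of_mem _ hi)
  rintro _ ⟨_, (rfl | ⟨ν, rfl⟩) | ⟨η, rfl⟩, rfl⟩
  · exact gen_mem (Z_mem_stage _)
  · exact gen_mem (X_mem_stage ν _)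
  · have gen_Y_eq : gen a (.Y η N) = N.factorial • gen a (.Y η (N + 1)) -
        ∑ m, gen a (.X (resMem η m N)) - a η N • gen a .Z := by
      rw [factorial_nsmul_gen_Y_succ, add_sub_cancel_right, add_sub_cancel_right]
    rw [gen_Y_eq]
    exact sub_mem (sub_mem (nsmul_mem (gen_mem (Y_mem_stage η _)) _)
      (sum_mem fun m _ ↦ gen_mem (X_mem_stage _ _))) (zsmul_mem (gen_mem (Z_mem_stage _)) _)

variable {a} in
theorem exists_mem_closure_gen_image_stage (g : Gx a) :
    ∃ N, g ∈ AddSubgroup.closure (gen a '' stage Λ N) := by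
  have iUnion_stage : ⋃ N, stage Λ N = Set.univ := by
    refine Set.eq_univ_of_forall fun i ↦ Set.mem_iUnion.2 ?_
    cases i with
    | X ν => exact ⟨0, X_mem_stage ν 0⟩
    | Y η n => exact ⟨n, Y_mem_stage η n⟩
    | Z => exact ⟨0, Z_mem_stage 0⟩
  rw [← AddSubgroup.mem_iSup_of_directed (monotone_closure_gen_image_stage a).directed_le,
    ← AddSubgroup.closure_iUnion, ← Set.image_iUnion, iUnion_stage, Set.image_univ,
    closure_range_gen]
  exact AddSubgroup.mem_top g

variable {a} in
theorem exists_linearCombination_stage (g : Gx a) :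
    ∃ N, ∃ c ∈ Finsupp.supported ℤ ℤ (stage Λ N), Finsupp.linearCombination ℤ (gen a) c = g := by
  obtain ⟨N, hN⟩ := exists_mem_closure_gen_image_stage g
  rw [← Submodule.span_int_eq_addSubgroupClosure, Submodule.mem_toAddSubgroup,
    Finsupp.mem_span_image_iff_linearCombination] at hN
  exact ⟨N, hN⟩

theorem exists_hom_eqOn_stage (N : ℕ) (w : Gen k S Λ → ℚ) :
    ∃ f : Gx a →+ ℚ, ∀ i ∈ stage Λ N, f (gen a i) = w i := by
  choose y hyN hy using fun η : ↥Λ ↦ exists_seq_mul_succ_eq_add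
    (fun n ↦ Nat.cast_ne_zero.2 n.factorial_ne_zero)
    (fun n ↦ a η n * w .Z + ∑ m, w (.X (resMem η m n))) N (w (.Y η N))
  let φ : Gen k S Λ → ℚ
    | .X ν => w (.X ν)
    | .Y η n => y η n
    | .Z => w .Z
  obtain ⟨f, hf⟩ := exists_hom_gen_eq a φ fun η n ↦ by
    simpa only [φ, nsmul_eq_mul, zsmul_eq_mul, add_assoc] using hy η n
  refine ⟨f, ?_⟩
  rintro _ ((rfl | ⟨ν, rfl⟩) | ⟨η, rfl⟩)
  · exact hf _
  · exact hf _
  · exact (hf _).trans (hyN η)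

/-- A set of generators is closed under the relations if, along with any `y_{η̄,n}`, it contains
every generator that occurs in some relation of `η̄`. -/
structure IsRelClosed (T : Set (Gen k S Λ)) : Prop where
  Y_mem : ∀ {η n}, Gen.Y η n ∈ T → ∀ n', Gen.Y η n' ∈ T
  X_mem : ∀ {η n}, Gen.Y η n ∈ T → ∀ m n', Gen.X (resMem η m n') ∈ T
  Z_mem : ∀ {η n}, Gen.Y η n ∈ T → Gen.Z ∈ T

namespace IsRelClosed

variable {T : Set (Gen k S Λ)}

theorem iUnion {ι : Sort*} {T : ι → Set (Gen k S Λ)} (hT : ∀ j, IsRelClosed (T j)) :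
    IsRelClosed (⋃ j, T j) where
  Y_mem h n' := by
    obtain ⟨j, hj⟩ := Set.mem_iUnion.1 h
    exact Set.mem_iUnion_of_mem j ((hT j).Y_mem hj n')
  X_mem h m n' := by
    obtain ⟨j, hj⟩ := Set.mem_iUnion.1 h
    exact Set.mem_iUnion_of_mem j ((hT j).X_mem hj m n')
  Z_mem h := by
    obtain ⟨j, hj⟩ := Set.mem_iUnion.1 h
    exact Set.mem_iUnion_of_mem j ((hT j).Z_mem hj)

variable {a} in
theorem hom_gen_eq_zero {M : Type*} [AddCommGroup M] [IsAddTorsionFree M] (hT : IsRelClosed T)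
    {f : Gx a →+ M} {N : ℕ} (hf : ∀ i ∈ T, i ∈ stage Λ N → f (gen a i) = 0) :
    ∀ i ∈ T, f (gen a i) = 0 := by
  have f_X {ν} (hν : Gen.X ν ∈ T) : f (gen a (.X ν)) = 0 := hf _ hν (X_mem_stage ν N)
  have f_Z (hZ : Gen.Z ∈ T) : f (gen a .Z) = 0 := hf _ hZ (Z_mem_stage N)
  rintro (ν | ⟨η, n⟩ | _) hi
  · exact f_X hi
  · let y (n' : ℕ) : M := f (gen a (.Y η n'))
    have y_succ (n' : ℕ) : n'.factorial • y (n' + 1) = y n' := by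
      rw [← map_nsmul, factorial_nsmul_gen_Y_succ, map_add, map_add, map_zsmul, map_sum,
        f_Z (hT.Z_mem hi), smul_zero, add_zero,
        Finset.sum_eq_zero fun m _ ↦ f_X (hT.X_mem hi m n'), add_zero]
    have y_N : y N = 0 := hf _ (hT.Y_mem hi N) (Y_mem_stage η N)
    exact eq_zero_of_nsmul_succ_eq Nat.factorial_ne_zero y_succ y_N n
  · exact f_Z hi

theorem exists_coordinate_hom (hT : IsRelClosed T) (N : ℕ) {i : Gen k S Λ} (hi : i ∉ T) :
    ∃ f : Gx a →+ ℚ, AddSubgroup.closure (gen a '' T) ≤ f.ker ∧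
      ∀ c ∈ Finsupp.supported ℤ ℤ (stage Λ N), f (Finsupp.linearCombination ℤ (gen a) c) = c i := by
  classical
  obtain ⟨f, hf⟩ := exists_hom_eqOn_stage a N (Pi.single i 1)
  refine ⟨f, (AddSubgroup.closure_le _).2 ?_, fun c hc ↦ ?_⟩
  · rintro _ ⟨j, hj, rfl⟩
    refine hT.hom_gen_eq_zero (N := N) (fun j hjT hjN ↦ ?_) j hj
    rw [hf j hjN, Pi.single_eq_of_ne (ne_of_mem_of_not_mem hjT hi)]
  · calc
      f (Finsupp.linearCombination ℤ (gen a) c) = c.sum fun j cj ↦ cj • f (gen a j) := by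
        simp only [Finsupp.linearCombination_apply, map_finsuppSum, map_zsmul]
      _ = c.sum fun j cj ↦ cj • (Pi.single i 1 : Gen k S Λ → ℚ) j :=
        Finsupp.sum_congr fun j hj ↦ by rw [hf j (hc hj)]
      _ = c i := by
        simp +contextual [Pi.single_apply, Finsupp.sum]

theorem nsmulSaturated_closure_gen_image (hT : IsRelClosed T) :
    (AddSubgroup.closure (gen a '' T)).NSMulSaturated := by
  intro n g hng
  refine or_iff_not_imp_left.2 fun hn ↦ ?_
  obtain ⟨N, c, hc, rfl⟩ := exists_linearCombination_stage g
  have mem_of_mem_support {i : Gen k S Λ} (hi : i ∈ c.support) : i ∈ T := by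
    by_contra hiT
    obtain ⟨f, hfT, hf⟩ := hT.exists_coordinate_hom a N hiT
    have f_eq_zero : f (Finsupp.linearCombination ℤ (gen a) c) = 0 :=
      (AddSubmonoid.ker_saturated f (hfT hng)).resolve_left hn
    rw [hf c hc, Int.cast_eq_zero] at f_eq_zero
    exact Finsupp.mem_support_iff.1 hi f_eq_zero
  exact sum_mem fun i hi ↦ zsmul_mem
    (AddSubgroup.subset_closure (Set.mem_image_of_mem _ (mem_of_mem_support hi))) _

end IsRelClosed

variable (Λ) in
/-- The generators of `G_x` whose images are the generators of `G_U`. -/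
def gensOver (U : Set (ℕ → S)) : Set (Gen k S Λ)
  | .X ν => ∃ (η : Fin (k + 1) → ℕ → S) (m : Fin (k + 1)) (n : ℕ),
      (∀ l, η l ∈ U) ∧ (ν : Res k S) = restrictAt η m n
  | .Y η _ => ∀ l, (η : Fin (k + 1) → ℕ → S) l ∈ U
  | .Z => True

theorem gensOver_mono {U V : Set (ℕ → S)} (hUV : U ⊆ V) : gensOver Λ U ⊆ gensOver Λ V := by
  rintro (ν | ⟨η, n⟩ | _) hi
  · obtain ⟨η, m, n, hη, hν⟩ := hi
    exact ⟨η, m, n, fun l ↦ hUV (hη l), hν⟩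
  · exact fun l ↦ hUV (hi l)
  · trivial

variable (Λ) in
theorem isRelClosed_gensOver (U : Set (ℕ → S)) : IsRelClosed (gensOver Λ U) where
  Y_mem h _ := h
  X_mem h m n' := ⟨_, m, n', h, rfl⟩
  Z_mem _ := trivial

theorem GU_eq_closure (U : Set (ℕ → S)) :
    GU a U = AddSubgroup.closure (gen a '' gensOver Λ U) := by
  refine congrArg AddSubgroup.closure (Set.Subset.antisymm ?_ ?_)
  · rintro _ ((rfl | ⟨η, n, hη, rfl⟩) | ⟨η, m, n, ν, hη, hν, rfl⟩)
    · exact ⟨.Z, trivial, rfl⟩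
    · exact ⟨.Y η n, hη, rfl⟩
    · exact ⟨.X ν, ⟨η, m, n, hη, hν⟩, rfl⟩
  · rintro _ ⟨ν | ⟨η, n⟩ | _, hi, rfl⟩
    · obtain ⟨η, m, n, hη, hν⟩ := hi
      exact .inr ⟨η, m, n, ν, hη, hν, rfl⟩
    · exact .inl (.inr ⟨η, n, hi, rfl⟩)
    · exact .inl (.inl rfl)

theorem GUu_eq_closure (U u : Set (ℕ → S)) :
    GUu a U u = AddSubgroup.closure (gen a '' ⋃ η ∈ u, gensOver Λ (U ∪ (u \ {η}))) := by
  simp only [GUu, GU_eq_closure, Set.image_iUnion, AddSubgroup.closure_iUnion]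

theorem GU_mono_s18 {U V : Set (ℕ → S)} (hUV : U ⊆ V) : GU a U ≤ GU a V := by
  rw [GU_eq_closure, GU_eq_closure]
  exact AddSubgroup.closure_mono (Set.image_mono (gensOver_mono hUV))

theorem GUu_le_GU (U u : Set (ℕ → S)) : GUu a U u ≤ GU a (U ∪ u) :=
  iSup₂_le fun _ _ ↦ GU_mono_s18 a (Set.union_subset_union_right _ Set.sdiff_subset)

theorem nsmulSaturated_GU (U : Set (ℕ → S)) : (GU a U).NSMulSaturated := by
  rw [GU_eq_closure]
  exact (isRelClosed_gensOver Λ U).nsmulSaturated_closure_gen_image a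

theorem nsmulSaturated_GUu (U u : Set (ℕ → S)) : (GUu a U u).NSMulSaturated := by
  rw [GUu_eq_closure]
  exact (IsRelClosed.iUnion fun _ ↦ .iUnion fun _ ↦
    isRelClosed_gensOver Λ _).nsmulSaturated_closure_gen_image a

end Sh883

open Sh883 in
theorem stmt18_general {k : ℕ} {S : Type u} (Λ : Set (Fin (k + 1) → ℕ → S)) (a : ↥Λ → ℕ → ℤ)
    (U u : Set (ℕ → S)) :
    GUu a U u ≤ GU a (U ∪ u) ∧ (GUu a U u).NSMulSaturated ∧ (GU a (U ∪ u)).NSMulSaturated :=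
  ⟨GUu_le_GU a U u, nsmulSaturated_GUu a U u, nsmulSaturated_GU a (U ∪ u)⟩

open Sh883 in
/-- Let `x = (S, Λ, a)` be an abelian-group `k`-parameter, `U` a set of
functions `ℕ → S` and `u` a finite set of functions `ℕ → S` disjoint from `U`.  Then
`G_{U,u}` is a subgroup of `G_{U∪u}`; moreover `G_{U,u}` is a pure subgroup of `G_{U∪u}`
and `G_{U∪u}` is a pure subgroup of `G_x`. -/
theorem stmt18 {k : ℕ} {S : Type u} (Λ : Set (Fin (k + 1) → ℕ → S)) (a : ↥Λ → ℕ → ℤ)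
    (U u : Set (ℕ → S)) (hufin : u.Finite) (hdisj : Disjoint U u) :
    GUu a U u ≤ GU a (U ∪ u) ∧
      (∀ n : ℕ, 0 < n → ∀ g ∈ GUu a U u,
        (∃ y ∈ GU a (U ∪ u), n • y = g) → ∃ y ∈ GUu a U u, n • y = g) ∧
      (∀ n : ℕ, 0 < n → ∀ g ∈ GU a (U ∪ u),
        (∃ y : Gx a, n • y = g) → ∃ y ∈ GU a (U ∪ u), n • y = g) := by
  obtain ⟨le, satGUu, satGU⟩ := stmt18_general Λ a U u
  exact ⟨le, fun _ hn _ hg ⟨y, _, hy⟩ ↦ exists_mem_nsmul_eq_of_nsmulSaturated satGUu hn hg ⟨y, hy⟩,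
    fun _ hn _ hg ↦ exists_mem_nsmul_eq_of_nsmulSaturated satGU hn hg⟩
end
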